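/- arXiv:1003.0625 — 2 statements merged into one kernel-verified Lean document; each statement's English description precedes it below -/
import Mathlib

section
/- Let N ∈ {3,4,5}. There exist constants c > 0 and ε₀ > 0 such that for every ε ∈ (0, ε₀] and every continuously differentiable v : ℝ^N → ℝ with ∇v ∈ L²(ℝ^N) and v ∈ L^{2N/(N−2)}(ℝ^N) satisfying ε ≤ ∫_{ℝ^N}|∇v|² dx ≤ (N/(N−2))^{(N−2)/2} ∫_{ℝ^N}|∇W|² dx − ε, one has E(v,0) ≥ c·ε. -/
open MeasureTheory Metric Filter Set

noncomputable section

/-- The ground state `W(x) = (1 + |x|²/(N(N-2)))^(-(N-2)/2)`. -/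
def W (N : ℕ) (x : EuclideanSpace ℝ (Fin N)) : ℝ :=
  (1 + ‖x‖ ^ 2 / ((N : ℝ) * ((N : ℝ) - 2))) ^ (-(((N : ℝ) - 2) / 2))

/-- The energy `E(v₀,v₁)`. -/
def energy (N : ℕ) (v₀ v₁ : EuclideanSpace ℝ (Fin N) → ℝ) : ℝ :=
  (1 / 2) * (∫ x, v₁ x ^ 2)
    + (1 / 2) * (∫ x, ‖gradient v₀ x‖ ^ 2)
    - ((N : ℝ) - 2) / (2 * (N : ℝ)) * (∫ x, |v₀ x| ^ (2 * (N : ℝ) / ((N : ℝ) - 2)))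

/-- The first coordinate of a point of `ℝ^N`. -/
def firstCoord {N : ℕ} (x : EuclideanSpace ℝ (Fin N)) : ℝ :=
  if h : 0 < N then x ⟨0, h⟩ else 0

/-- The Lorentz-transformed ground state `W_ℓ(t,x)`; the sum `x₂² + ⋯ + x_N²` is written
as `‖x‖² - x₁²`. -/
def Wl (N : ℕ) (ℓ : ℝ) (t : ℝ) (x : EuclideanSpace ℝ (Fin N)) : ℝ :=
  (1 + (firstCoord x - t * ℓ) ^ 2 / ((N : ℝ) * ((N : ℝ) - 2) * (1 - ℓ ^ 2))
     + (‖x‖ ^ 2 - firstCoord x ^ 2) / ((N : ℝ) * ((N : ℝ) - 2))) ^ (-(((N : ℝ) - 2) / 2))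

/-- The time derivative `∂ₜ W_ℓ(t,x)`. -/
def dtWl (N : ℕ) (ℓ : ℝ) (t : ℝ) (x : EuclideanSpace ℝ (Fin N)) : ℝ :=
  deriv (fun s => Wl N ℓ s x) t

/-- The second partial derivative `∂²f/∂xⱼ²` at `x`. -/
def d2 {N : ℕ} (f : EuclideanSpace ℝ (Fin N) → ℝ) (j : Fin N)
    (x : EuclideanSpace ℝ (Fin N)) : ℝ :=
  fderiv ℝ (fun y => fderiv ℝ f y (EuclideanSpace.single j 1)) x (EuclideanSpace.single j 1)

/-
The sharp Sobolev inequality `∫ |v|^q ≤ A (∫ |∇v|² / A)^(q/2)`, where `q = 2N/(N-2)` and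
`A = ∫ |∇W|² = ∫ W^q`, comes from mass transport, following Cordero-Erausquin, Nazaret and
Villani. For `w > 0` with `∫ w^q = A`, let `T` be the Knothe map carrying the density `w^q` to
`W^q`; its Jacobian is triangular with positive diagonal, so AM-GM bounds `(det DT)^(1/N)` by
`div T / N`. Integrating by parts moves the divergence onto a power of `w`, and Cauchy–Schwarz
against `∫ |x|² W^q` leaves `∫ |∇w|²`. For `w = W` the bound is an equality because
`∫ |x|² W^q = N² ∫ W^q`, so the constant is the sharp one.

With `y = ∫ |∇v|²` and `Y = (N/(N-2))^((N-2)/2) A` this says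
`E(v, 0) ≥ (y/2) (1 - (y/Y)^(2/(N-2)))`, and Bernoulli's inequality bounds the right-hand side
below by a multiple of `ε` as soon as `ε ≤ y ≤ Y - ε`.
-/

/-! ### Monotone transport on the line -/

/-- A continuous family `f x` of positive densities on `ℝ` with a common integrable majorant. -/
structure DensityFamily {X : Type*} [TopologicalSpace X] (f : X → ℝ → ℝ) : Prop where
  continuous_uncurry : Continuous (Function.uncurry f)
  pos : ∀ x s, 0 < f x s
  exists_dominating : ∃ b : ℝ → ℝ, Integrable b ∧ ∀ x s, f x s ≤ b s

/-- The total mass of the density `f x`. -/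
def mass {X : Type*} (f : X → ℝ → ℝ) (x : X) : ℝ :=
  ∫ s, f x s

/-- The normalized distribution function of the density `f x`. -/
def distribution {X : Type*} (f : X → ℝ → ℝ) (x : X) (s : ℝ) : ℝ :=
  (∫ t in Iic s, f x t) / mass f x

/-- The quantile function of the density `f x`, meaningful on `Ioo 0 1` only. -/
def quantile {X : Type*} (f : X → ℝ → ℝ) (x : X) : ℝ → ℝ :=
  Function.invFun (distribution f x)

/-- The increasing map carrying the normalized density `f x` to the normalized density
`g (τ x)`. -/
def monotoneTransport {X Y : Type*} (f : X → ℝ → ℝ) (g : Y → ℝ → ℝ) (τ : X → Y) (x : X) (s : ℝ) :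
    ℝ :=
  quantile g (τ x) (distribution f x s)

namespace DensityFamily

variable {X : Type*} [TopologicalSpace X] {f : X → ℝ → ℝ}

lemma continuous (hf : DensityFamily f) (x : X) : Continuous (f x) :=
  hf.continuous_uncurry.comp (Continuous.prodMk_right x)

lemma integrable (hf : DensityFamily f) (x : X) : Integrable (f x) := by
  obtain ⟨b, hb, hfb⟩ := hf.exists_dominating
  refine hb.mono' (hf.continuous x).aestronglyMeasurable (ae_of_all _ fun s => ?_)
  rw [Real.norm_of_nonneg (hf.pos x s).le]
  exact hfb x s

lemma mass_pos (hf : DensityFamily f) (x : X) : 0 < mass f x :=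
  integral_pos_of_integrable_nonneg_nonzero (x := 0) (hf.continuous x) (hf.integrable x)
    (fun s => (hf.pos x s).le) (hf.pos x 0).ne'

lemma distribution_eq (hf : DensityFamily f) (x : X) (s : ℝ) :
    distribution f x s = ((∫ t in Iic 0, f x t) + ∫ t in (0 : ℝ)..s, f x t) / mass f x := by
  rw [distribution, ← intervalIntegral.integral_Iic_sub_Iic (hf.integrable x).integrableOn
    (hf.integrable x).integrableOn, add_sub_cancel]

lemma hasDerivAt_distribution (hf : DensityFamily f) (x : X) (s : ℝ) :
    HasDerivAt (distribution f x) (f x s / mass f x) s := by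
  rw [funext (hf.distribution_eq x)]
  exact ((intervalIntegral.integral_hasDerivAt_right ((hf.continuous x).intervalIntegrable _ _)
    ((hf.continuous x).stronglyMeasurableAtFilter _ _)
    (hf.continuous x).continuousAt).const_add _).div_const _

lemma strictMono_distribution (hf : DensityFamily f) (x : X) : StrictMono (distribution f x) := by
  refine strictMono_of_deriv_pos fun s => ?_
  rw [(hf.hasDerivAt_distribution x s).deriv]
  exact div_pos (hf.pos x s) (hf.mass_pos x)

lemma tendsto_distribution_atTop (hf : DensityFamily f) (x : X) :
    Tendsto (distribution f x) atTop (nhds 1) := by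
  have h := ((aecover_Iic tendsto_id).integral_tendsto_of_countably_generated
    (hf.integrable x)).div_const (mass f x)
  rwa [← mass, div_self (hf.mass_pos x).ne'] at h

lemma tendsto_distribution_atBot (hf : DensityFamily f) (x : X) :
    Tendsto (distribution f x) atBot (nhds 0) := by
  have h := (((aecover_Ioi tendsto_id).integral_tendsto_of_countably_generated
    (hf.integrable x)).const_sub (mass f x)).div_const (mass f x)
  rw [← mass, sub_self, zero_div] at h
  refine h.congr fun s => ?_
  rw [distribution, mass, ← intervalIntegral.integral_Iic_add_Ioi (b := s)
    (hf.integrable x).integrableOn (hf.integrable x).integrableOn, id_eq, add_sub_cancel_right]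

lemma distribution_mem_Ioo (hf : DensityFamily f) (x : X) (s : ℝ) :
    distribution f x s ∈ Ioo (0 : ℝ) 1 := by
  have hm := hf.strictMono_distribution x
  exact ⟨(hm.monotone.le_of_tendsto (hf.tendsto_distribution_atBot x) (s - 1)).trans_lt
      (hm (sub_one_lt s)),
    (hm (lt_add_one s)).trans_le
      (hm.monotone.ge_of_tendsto (hf.tendsto_distribution_atTop x) (s + 1))⟩

lemma exists_distribution_eq (hf : DensityFamily f) (x : X) {r : ℝ} (hr : r ∈ Ioo (0 : ℝ) 1) :
    ∃ s, distribution f x s = r := by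
  have hc : Continuous (distribution f x) :=
    continuous_iff_continuousAt.2 fun s => (hf.hasDerivAt_distribution x s).continuousAt
  obtain ⟨a, ha⟩ := ((hf.tendsto_distribution_atBot x).eventually (gt_mem_nhds hr.1)).exists
  obtain ⟨b, hb⟩ := ((hf.tendsto_distribution_atTop x).eventually (lt_mem_nhds hr.2)).exists
  exact mem_range_of_exists_le_of_exists_ge hc ⟨a, ha.le⟩ ⟨b, hb.le⟩

lemma distribution_quantile (hf : DensityFamily f) (x : X) {r : ℝ} (hr : r ∈ Ioo (0 : ℝ) 1) :
    distribution f x (quantile f x r) = r :=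
  Function.invFun_eq (hf.exists_distribution_eq x hr)

lemma distribution_lt_iff_lt_quantile (hf : DensityFamily f) (x : X) {r : ℝ}
    (hr : r ∈ Ioo (0 : ℝ) 1) (a : ℝ) : distribution f x a < r ↔ a < quantile f x r := by
  rw [← (hf.strictMono_distribution x).lt_iff_lt (b := quantile f x r),
    hf.distribution_quantile x hr]

lemma lt_distribution_iff_quantile_lt (hf : DensityFamily f) (x : X) {r : ℝ}
    (hr : r ∈ Ioo (0 : ℝ) 1) (a : ℝ) : r < distribution f x a ↔ quantile f x r < a := by
  rw [← (hf.strictMono_distribution x).lt_iff_lt (a := quantile f x r),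
    hf.distribution_quantile x hr]

section Continuity

variable [FirstCountableTopology X]

lemma continuous_setIntegral (hf : DensityFamily f) (S : Set ℝ) :
    Continuous fun x => ∫ s in S, f x s := by
  obtain ⟨b, hb, hfb⟩ := hf.exists_dominating
  refine continuous_of_dominated (fun x => (hf.continuous x).aestronglyMeasurable)
    (fun x => ae_of_all _ fun s => ?_) hb.integrableOn
    (ae_of_all _ fun s => hf.continuous_uncurry.comp (Continuous.prodMk_left s))
  rw [Real.norm_of_nonneg (hf.pos x s).le]
  exact hfb x s

lemma continuous_mass (hf : DensityFamily f) : Continuous (mass f) := by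
  unfold mass
  simpa only [setIntegral_univ] using hf.continuous_setIntegral univ

lemma continuous_uncurry_distribution (hf : DensityFamily f) :
    Continuous fun p : X × ℝ => distribution f p.1 p.2 := by
  simp only [hf.distribution_eq]
  refine (((hf.continuous_setIntegral (Iic 0)).comp continuous_fst).add ?_).div₀
    (hf.continuous_mass.comp continuous_fst) fun p => (hf.mass_pos p.1).ne'
  exact intervalIntegral.continuous_parametric_intervalIntegral_of_continuous
    (f := fun (p : X × ℝ) t => f p.1 t)
    (hf.continuous_uncurry.comp ((continuous_fst.comp continuous_fst).prodMk continuous_snd))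
    continuous_snd

lemma continuousAt_uncurry_quantile (hf : DensityFamily f) (x : X) {r : ℝ}
    (hr : r ∈ Ioo (0 : ℝ) 1) : ContinuousAt (fun p : X × ℝ => quantile f p.1 p.2) (x, r) := by
  have hIoo : ∀ᶠ p : X × ℝ in nhds (x, r), p.2 ∈ Ioo (0 : ℝ) 1 :=
    continuous_snd.continuousAt.eventually (isOpen_Ioo.mem_nhds hr)
  have hc (a : ℝ) : ContinuousAt (fun p : X × ℝ => distribution f p.1 a) (x, r) :=
    (hf.continuous_uncurry_distribution.comp
      (continuous_fst.prodMk continuous_const)).continuousAt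
  refine tendsto_order.2 ⟨fun a ha => ?_, fun a ha => ?_⟩
  · filter_upwards [(hc a).eventually_lt continuous_snd.continuousAt
      ((hf.distribution_lt_iff_lt_quantile x hr a).2 ha), hIoo] with p hp hp'
    exact (hf.distribution_lt_iff_lt_quantile p.1 hp' a).1 hp
  · filter_upwards [continuous_snd.continuousAt.eventually_lt (hc a)
      ((hf.lt_distribution_iff_quantile_lt x hr a).2 ha), hIoo] with p hp hp'
    exact (hf.lt_distribution_iff_quantile_lt p.1 hp' a).1 hp

lemma hasDerivAt_quantile (hf : DensityFamily f) (x : X) {r : ℝ} (hr : r ∈ Ioo (0 : ℝ) 1) :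
    HasDerivAt (quantile f x) (f x (quantile f x r) / mass f x)⁻¹ r := by
  refine (hf.hasDerivAt_distribution x _).of_local_left_inverse ?_
    (div_pos (hf.pos _ _) (hf.mass_pos _)).ne' ?_
  · exact ContinuousAt.comp (f := fun r => (x, r)) (g := fun p : X × ℝ => quantile f p.1 p.2)
      (hf.continuousAt_uncurry_quantile x hr) (Continuous.prodMk_right _).continuousAt
  · filter_upwards [isOpen_Ioo.mem_nhds hr] with r hr
    exact hf.distribution_quantile x hr

end Continuity

variable {Y : Type*} [TopologicalSpace Y] {g : Y → ℝ → ℝ}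

lemma distribution_monotoneTransport (hf : DensityFamily f) (hg : DensityFamily g) (τ : X → Y)
    (x : X) (s : ℝ) :
    distribution g (τ x) (monotoneTransport f g τ x s) = distribution f x s :=
  hg.distribution_quantile _ (hf.distribution_mem_Ioo x s)

lemma bijective_monotoneTransport (hf : DensityFamily f) (hg : DensityFamily g) (τ : X → Y)
    (x : X) : Function.Bijective (monotoneTransport f g τ x) := by
  constructor
  · intro a b h
    apply (hf.strictMono_distribution x).injective
    rw [← hf.distribution_monotoneTransport hg τ, h, hf.distribution_monotoneTransport hg τ]
  · intro t
    obtain ⟨s, hs⟩ := hf.exists_distribution_eq x (hg.distribution_mem_Ioo (τ x) t)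
    exact ⟨s, (hg.strictMono_distribution (τ x)).injective
      (by rw [hf.distribution_monotoneTransport hg, hs])⟩

variable [FirstCountableTopology Y]

lemma continuous_uncurry_monotoneTransport [FirstCountableTopology X] (hf : DensityFamily f)
    (hg : DensityFamily g) {τ : X → Y} (hτ : Continuous τ) :
    Continuous fun p : X × ℝ => monotoneTransport f g τ p.1 p.2 :=
  continuous_iff_continuousAt.2 fun p =>
    ContinuousAt.comp (f := fun p : X × ℝ => (τ p.1, distribution f p.1 p.2))
      (g := fun p : Y × ℝ => quantile g p.1 p.2)
      (hg.continuousAt_uncurry_quantile _ (hf.distribution_mem_Ioo p.1 p.2))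
      ((hτ.comp continuous_fst).prodMk hf.continuous_uncurry_distribution).continuousAt

lemma hasDerivAt_monotoneTransport (hf : DensityFamily f) (hg : DensityFamily g) (τ : X → Y)
    (x : X) (s : ℝ) :
    HasDerivAt (monotoneTransport f g τ x)
      ((g (τ x) (monotoneTransport f g τ x s) / mass g (τ x))⁻¹ * (f x s / mass f x)) s :=
  (hg.hasDerivAt_quantile (τ x) (hf.distribution_mem_Ioo x s)).comp s
    (hf.hasDerivAt_distribution x s)

lemma lintegral_comp_monotoneTransport (hf : DensityFamily f) (hg : DensityFamily g) (τ : X → Y)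
    (x : X) {φ : ℝ → ENNReal} (hφ : Measurable φ) :
    ∫⁻ s, φ (monotoneTransport f g τ x s) * ENNReal.ofReal (f x s)
      = ENNReal.ofReal (mass f x) * (ENNReal.ofReal (mass g (τ x))⁻¹ *
          ∫⁻ t, φ t * ENNReal.ofReal (g (τ x) t)) := by
  have hd := hf.hasDerivAt_monotoneTransport hg τ x
  have hbij := hf.bijective_monotoneTransport hg τ x
  have hsubst := lintegral_image_eq_lintegral_abs_deriv_mul MeasurableSet.univ
    (fun s _ => (hd s).hasDerivWithinAt) hbij.1.injOn (fun t => φ t * ENNReal.ofReal (g (τ x) t))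
  rw [image_univ, hbij.2.range_eq, Measure.restrict_univ] at hsubst
  have hgm : Measurable (g (τ x)) := (hg.continuous _).measurable
  have hfm : Measurable (f x) := (hf.continuous _).measurable
  have htm : Measurable (monotoneTransport f g τ x) :=
    (continuous_iff_continuousAt.2 fun s => (hd s).continuousAt).measurable
  rw [hsubst, ← lintegral_const_mul _ (by fun_prop), ← lintegral_const_mul _ (by fun_prop)]
  refine lintegral_congr fun s => ?_
  set t := monotoneTransport f g τ x s
  have hfs := hf.pos x s
  have hgt := hg.pos (τ x) t
  have hmf := hf.mass_pos x
  have hmg := hg.mass_pos (τ x)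
  have hsplit : f x s = mass f x * ((mass g (τ x))⁻¹ *
      (((g (τ x) t / mass g (τ x))⁻¹ * (f x s / mass f x)) * g (τ x) t)) := by field_simp
  rw [abs_of_pos (by positivity)]
  conv_lhs => rw [hsplit]
  rw [ENNReal.ofReal_mul hmf.le, ENNReal.ofReal_mul (by positivity),
    ENNReal.ofReal_mul (by positivity)]
  ring

end DensityFamily

/-! ### The Knothe rearrangement -/

section RealDensity

variable {X : Type*} [MeasurableSpace X] {μ : Measure X} {F : X → ℝ}

lemma integrable_withDensity_ofReal_iff (hF : Measurable F) (hF0 : ∀ x, 0 ≤ F x) {φ : X → ℝ} :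
    Integrable φ (μ.withDensity fun x => ENNReal.ofReal (F x))
      ↔ Integrable (fun x => F x * φ x) μ := by
  simp only [integrable_withDensity_iff_integrable_smul' hF.ennreal_ofReal
    (ae_of_all _ fun _ => ENNReal.ofReal_lt_top), ENNReal.toReal_ofReal (hF0 _), smul_eq_mul]

lemma integral_withDensity_ofReal (hF : Measurable F) (hF0 : ∀ x, 0 ≤ F x) (φ : X → ℝ) :
    ∫ x, φ x ∂μ.withDensity (fun x => ENNReal.ofReal (F x)) = ∫ x, F x * φ x ∂μ := by
  simp only [integral_withDensity_eq_integral_toReal_smul hF.ennreal_ofReal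
    (ae_of_all _ fun _ => ENNReal.ofReal_lt_top), ENNReal.toReal_ofReal (hF0 _), smul_eq_mul]

end RealDensity

section EuclideanCons

variable {n : ℕ}

/-- The point of `ℝ^(n+1)` with first coordinate `s` and remaining coordinates `x`. -/
def euclideanCons (s : ℝ) (x : EuclideanSpace ℝ (Fin n)) : EuclideanSpace ℝ (Fin (n + 1)) :=
  WithLp.toLp 2 (Fin.cons s x.ofLp)

/-- The projection of `ℝ^(n+1)` to `ℝ^n` forgetting the first coordinate. -/
def euclideanTail (x : EuclideanSpace ℝ (Fin (n + 1))) : EuclideanSpace ℝ (Fin n) :=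
  WithLp.toLp 2 (Fin.tail x.ofLp)

@[simp]
lemma euclideanCons_zero (s : ℝ) (x : EuclideanSpace ℝ (Fin n)) : euclideanCons s x 0 = s :=
  rfl

@[simp]
lemma euclideanCons_succ (s : ℝ) (x : EuclideanSpace ℝ (Fin n)) (i : Fin n) :
    euclideanCons s x i.succ = x i :=
  rfl

@[simp]
lemma euclideanCons_euclideanTail (x : EuclideanSpace ℝ (Fin (n + 1))) :
    euclideanCons (x 0) (euclideanTail x) = x := by
  simp only [euclideanCons, euclideanTail, Fin.cons_self_tail, WithLp.toLp_ofLp]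

lemma euclideanTail_add_smul_single_zero (x : EuclideanSpace ℝ (Fin (n + 1))) (t : ℝ) :
    euclideanTail (x + t • EuclideanSpace.single 0 1) = euclideanTail x := by
  ext i
  simp [euclideanTail, Fin.tail]

lemma euclideanTail_add_smul_single_succ (x : EuclideanSpace ℝ (Fin (n + 1))) (t : ℝ)
    (i : Fin n) : euclideanTail (x + t • EuclideanSpace.single i.succ 1)
      = euclideanTail x + t • EuclideanSpace.single i 1 := by
  ext j
  simp [euclideanTail, Fin.tail, Pi.single_apply]

lemma continuous_euclideanCons :
    Continuous fun p : EuclideanSpace ℝ (Fin n) × ℝ => euclideanCons p.2 p.1 := by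
  refine (PiLp.continuous_toLp 2 _).comp (continuous_pi fun i => ?_)
  refine Fin.cases continuous_snd (fun j => ?_) i
  exact ((continuous_apply j).comp (PiLp.continuous_ofLp 2 _)).comp continuous_fst

lemma continuous_euclideanTail : Continuous (euclideanTail (n := n)) :=
  (PiLp.continuous_toLp 2 _).comp
    (continuous_pi fun i => (continuous_apply i.succ).comp (PiLp.continuous_ofLp 2 _))

lemma volume_preserving_euclideanCons :
    MeasurePreserving fun p : ℝ × EuclideanSpace ℝ (Fin n) => euclideanCons p.1 p.2 := by
  have hcons := (volume_preserving_piFinSuccAbove (fun _ : Fin (n + 1) => ℝ) 0).symm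
  have heq : (fun p : ℝ × EuclideanSpace ℝ (Fin n) => euclideanCons p.1 p.2)
      = WithLp.toLp 2 ∘ (MeasurableEquiv.piFinSuccAbove (fun _ : Fin (n + 1) => ℝ) 0).symm
        ∘ Prod.map id WithLp.ofLp := by
    funext p
    simp [euclideanCons, MeasurableEquiv.piFinSuccAbove_symm_apply, Fin.insertNthEquiv_zero,
      Fin.consEquiv]
  rw [heq]
  exact (PiLp.volume_preserving_toLp (Fin (n + 1))).comp
    (hcons.comp ((MeasurePreserving.id volume).prod (PiLp.volume_preserving_ofLp (Fin n))))

lemma lintegral_eq_lintegral_euclideanCons {φ : EuclideanSpace ℝ (Fin (n + 1)) → ENNReal}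
    (hφ : Measurable φ) :
    ∫⁻ x, φ x = ∫⁻ x : EuclideanSpace ℝ (Fin n), ∫⁻ s, φ (euclideanCons s x) := by
  rw [← volume_preserving_euclideanCons.lintegral_comp hφ]
  exact lintegral_prod_symm' _ (hφ.comp volume_preserving_euclideanCons.measurable)

lemma integral_integral_euclideanCons {F : EuclideanSpace ℝ (Fin (n + 1)) → ℝ}
    (hF : Integrable F) :
    ∫ x : EuclideanSpace ℝ (Fin n), ∫ s, F (euclideanCons s x) = ∫ x, F x := by
  have hmp := volume_preserving_euclideanCons (n := n)
  calc ∫ x : EuclideanSpace ℝ (Fin n), ∫ s, F (euclideanCons s x)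
      = ∫ q : ℝ × EuclideanSpace ℝ (Fin n), F (euclideanCons q.1 q.2) :=
        (integral_prod_symm _ (hmp.integrable_comp_of_integrable hF)).symm
    _ = ∫ x, F x ∂Measure.map (fun q : ℝ × EuclideanSpace ℝ (Fin n) => euclideanCons q.1 q.2)
          volume :=
        (integral_map hmp.aemeasurable (hmp.map_eq.symm ▸ hF.aestronglyMeasurable)).symm
    _ = ∫ x, F x := by rw [hmp.map_eq]

end EuclideanCons

section KnotheTransport

variable {n : ℕ}

/-- The densities on `ℝ^n` for which the triangular transport is constructed: the product decay is
inherited by marginals, and it makes the one-dimensional slices a `DensityFamily`. -/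
structure TransportDensity (F : EuclideanSpace ℝ (Fin n) → ℝ) : Prop where
  continuous : Continuous F
  pos : ∀ x, 0 < F x
  exists_le : ∃ C : ℝ, ∀ x, F x ≤ C * ∏ i, (1 + x i ^ 2)⁻¹

/-- The density on lines parallel to the first axis obtained by fixing the other coordinates. -/
def slice (F : EuclideanSpace ℝ (Fin (n + 1)) → ℝ) (x : EuclideanSpace ℝ (Fin n)) (s : ℝ) : ℝ :=
  F (euclideanCons s x)

/-- The marginal density obtained by integrating out the first coordinate. -/
def marginal (F : EuclideanSpace ℝ (Fin (n + 1)) → ℝ) : EuclideanSpace ℝ (Fin n) → ℝ :=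
  mass (slice F)

namespace TransportDensity

lemma integrable {F : EuclideanSpace ℝ (Fin n) → ℝ} (hF : TransportDensity F) :
    Integrable F := by
  obtain ⟨C, hC⟩ := hF.exists_le
  have hprod : Integrable fun x : EuclideanSpace ℝ (Fin n) => ∏ i, (1 + x i ^ 2)⁻¹ :=
    (PiLp.volume_preserving_ofLp (Fin n)).integrable_comp_of_integrable
      (Integrable.fintype_prod (f := fun _ s => (1 + s ^ 2)⁻¹) fun _ => integrable_inv_one_add_sq)
  refine (hprod.const_mul C).mono' hF.continuous.aestronglyMeasurable (ae_of_all _ fun x => ?_)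
  rw [Real.norm_of_nonneg (hF.pos x).le]
  exact hC x

variable {F : EuclideanSpace ℝ (Fin (n + 1)) → ℝ}

lemma exists_slice_le (hF : TransportDensity F) :
    ∃ C : ℝ, 0 ≤ C ∧ ∀ x s, slice F x s ≤ C * (∏ i, (1 + x i ^ 2)⁻¹) * (1 + s ^ 2)⁻¹ := by
  obtain ⟨C, hC⟩ := hF.exists_le
  refine ⟨C, ?_, fun x s => (hC _).trans_eq ?_⟩
  · simpa using ((hF.pos 0).trans_le (hC 0)).le
  · simp only [Fin.prod_univ_succ, euclideanCons_zero, euclideanCons_succ]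
    ring

lemma densityFamily_slice (hF : TransportDensity F) : DensityFamily (slice F) where
  continuous_uncurry := hF.continuous.comp continuous_euclideanCons
  pos _ _ := hF.pos _
  exists_dominating := by
    obtain ⟨C, hC0, hC⟩ := hF.exists_slice_le
    refine ⟨fun s => C * (1 + s ^ 2)⁻¹, integrable_inv_one_add_sq.const_mul C, fun x s => ?_⟩
    have hprod : ∏ i, (1 + x i ^ 2)⁻¹ ≤ 1 := Finset.prod_le_one (fun i _ => by positivity)
      fun i _ => inv_le_one_of_one_le₀ (le_add_of_nonneg_right (sq_nonneg _))
    exact (hC x s).trans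
      (mul_le_mul_of_nonneg_right (mul_le_of_le_one_right hC0 hprod) (by positivity))

lemma transportDensity_marginal (hF : TransportDensity F) : TransportDensity (marginal F) where
  continuous := hF.densityFamily_slice.continuous_mass
  pos := hF.densityFamily_slice.mass_pos
  exists_le := by
    obtain ⟨C, -, hC⟩ := hF.exists_slice_le
    refine ⟨C * ∫ s : ℝ, (1 + s ^ 2)⁻¹, fun x => ?_⟩
    calc marginal F x ≤ ∫ s, C * (∏ i, (1 + x i ^ 2)⁻¹) * (1 + s ^ 2)⁻¹ :=
          integral_mono (hF.densityFamily_slice.integrable x)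
            (integrable_inv_one_add_sq.const_mul _) (hC x)
      _ = C * (∫ s : ℝ, (1 + s ^ 2)⁻¹) * ∏ i, (1 + x i ^ 2)⁻¹ := by
          rw [integral_const_mul]
          ring

lemma integral_marginal (hF : TransportDensity F) : ∫ x, marginal F x = ∫ x, F x :=
  integral_integral_euclideanCons hF.integrable

end TransportDensity

/-- `T` is a Knothe rearrangement of the density `F` into the density `G`: it carries `F` to `G`,
and the diagonal entries `p i = ∂ᵢTᵢ > 0` of its triangular Jacobian satisfy the Monge–Ampère
equation. -/
structure KnotheTransport (F G : EuclideanSpace ℝ (Fin n) → ℝ)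
    (T : EuclideanSpace ℝ (Fin n) → EuclideanSpace ℝ (Fin n))
    (p : Fin n → EuclideanSpace ℝ (Fin n) → ℝ) : Prop where
  continuous : Continuous T
  continuous_diag : ∀ i, Continuous (p i)
  diag_pos : ∀ i x, 0 < p i x
  hasLineDerivAt : ∀ i x,
    HasLineDerivAt ℝ (fun x => T x i) (p i x) x (EuclideanSpace.single i 1)
  mul_prod_diag : ∀ x, G (T x) * ∏ i, p i x = F x
  measurePreserving : MeasurePreserving T (volume.withDensity fun x => ENNReal.ofReal (F x))
    (volume.withDensity fun x => ENNReal.ofReal (G x))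

/-- The Knothe rearrangement of `F` into `G` built from one, `T`, between the marginals. -/
def knotheMap (F G : EuclideanSpace ℝ (Fin (n + 1)) → ℝ)
    (T : EuclideanSpace ℝ (Fin n) → EuclideanSpace ℝ (Fin n))
    (x : EuclideanSpace ℝ (Fin (n + 1))) : EuclideanSpace ℝ (Fin (n + 1)) :=
  euclideanCons (monotoneTransport (slice F) (slice G) T (euclideanTail x) (x 0))
    (T (euclideanTail x))

/-- The diagonal Jacobian entries of `knotheMap F G T`, where `p` are those of `T`. -/
def knotheDiag (F G : EuclideanSpace ℝ (Fin (n + 1)) → ℝ)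
    (T : EuclideanSpace ℝ (Fin n) → EuclideanSpace ℝ (Fin n))
    (p : Fin n → EuclideanSpace ℝ (Fin n) → ℝ) : Fin (n + 1) → EuclideanSpace ℝ (Fin (n + 1)) → ℝ :=
  Fin.cons
    (fun x => (G (knotheMap F G T x) / marginal G (T (euclideanTail x)))⁻¹
      * (F x / marginal F (euclideanTail x)))
    (fun i x => p i (euclideanTail x))

/-- The average of `φ` over the line through `y` parallel to the first axis, with respect to the
conditional density of `G` on that line. -/
def fiberAverage (G : EuclideanSpace ℝ (Fin (n + 1)) → ℝ)
    (φ : EuclideanSpace ℝ (Fin (n + 1)) → ENNReal) (y : EuclideanSpace ℝ (Fin n)) : ENNReal :=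
  ENNReal.ofReal (marginal G y)⁻¹ * ∫⁻ t, φ (euclideanCons t y) * ENNReal.ofReal (slice G y t)

lemma measurable_fiberAverage {G : EuclideanSpace ℝ (Fin (n + 1)) → ℝ} (hG : TransportDensity G)
    {φ : EuclideanSpace ℝ (Fin (n + 1)) → ENNReal} (hφ : Measurable φ) :
    Measurable (fiberAverage G φ) := by
  have hcons := (continuous_euclideanCons (n := n)).measurable
  exact hG.transportDensity_marginal.continuous.measurable.inv.ennreal_ofReal.mul
    (Measurable.lintegral_prod_right'
      ((hφ.comp hcons).mul (hG.continuous.measurable.comp hcons).ennreal_ofReal))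

lemma ofReal_marginal_mul_fiberAverage {G : EuclideanSpace ℝ (Fin (n + 1)) → ℝ}
    (hG : TransportDensity G) (φ : EuclideanSpace ℝ (Fin (n + 1)) → ENNReal)
    (y : EuclideanSpace ℝ (Fin n)) :
    ENNReal.ofReal (marginal G y) * fiberAverage G φ y
      = ∫⁻ t, ENNReal.ofReal (slice G y t) * φ (euclideanCons t y) := by
  have hy := hG.transportDensity_marginal.pos y
  rw [fiberAverage, ← mul_assoc, ← ENNReal.ofReal_mul hy.le, mul_inv_cancel₀ hy.ne',
    ENNReal.ofReal_one, one_mul]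
  exact lintegral_congr fun t => mul_comm _ _

section Succ

variable {F G : EuclideanSpace ℝ (Fin (n + 1)) → ℝ} (hF : TransportDensity F)
  (hG : TransportDensity G) {T : EuclideanSpace ℝ (Fin n) → EuclideanSpace ℝ (Fin n)}

include hF hG

lemma continuous_knotheMap (hT : Continuous T) : Continuous (knotheMap F G T) :=
  continuous_euclideanCons.comp ((hT.comp continuous_euclideanTail).prodMk
    ((hF.densityFamily_slice.continuous_uncurry_monotoneTransport hG.densityFamily_slice hT).comp
      (continuous_euclideanTail.prodMk (continuous_apply 0 |>.comp (PiLp.continuous_ofLp 2 _)))))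

lemma continuous_knotheDiag_zero (hT : Continuous T)
    (p : Fin n → EuclideanSpace ℝ (Fin n) → ℝ) : Continuous (knotheDiag F G T p 0) := by
  have hmF := hF.transportDensity_marginal
  have hmG := hG.transportDensity_marginal
  have hGT : Continuous fun x => G (knotheMap F G T x) / marginal G (T (euclideanTail x)) :=
    (hG.continuous.comp (continuous_knotheMap hF hG hT)).div₀
      (hmG.continuous.comp (hT.comp continuous_euclideanTail)) fun x => (hmG.pos _).ne'
  exact (hGT.inv₀ fun x => (div_pos (hG.pos _) (hmG.pos _)).ne').mul
    (hF.continuous.div₀ (hmF.continuous.comp continuous_euclideanTail) fun x => (hmF.pos _).ne')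

lemma hasLineDerivAt_knotheMap_zero (p : Fin n → EuclideanSpace ℝ (Fin n) → ℝ)
    (x : EuclideanSpace ℝ (Fin (n + 1))) :
    HasLineDerivAt ℝ (fun x => knotheMap F G T x 0) (knotheDiag F G T p 0 x) x
      (EuclideanSpace.single 0 1) := by
  have hd := hF.densityFamily_slice.hasDerivAt_monotoneTransport hG.densityFamily_slice T
    (euclideanTail x) (x 0)
  rw [← add_zero (x 0)] at hd
  have hshift := HasDerivAt.comp_const_add (x 0) 0 hd
  simpa [HasLineDerivAt, knotheMap, knotheDiag, euclideanTail_add_smul_single_zero, slice,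
    marginal] using hshift

lemma mul_prod_knotheDiag {p : Fin n → EuclideanSpace ℝ (Fin n) → ℝ}
    (hK : KnotheTransport (marginal F) (marginal G) T p) (x : EuclideanSpace ℝ (Fin (n + 1))) :
    G (knotheMap F G T x) * ∏ i, knotheDiag F G T p i x = F x := by
  have hGT := hG.pos (knotheMap F G T x)
  have hmG := hG.transportDensity_marginal.pos (T (euclideanTail x))
  have hmF := hF.transportDensity_marginal.pos (euclideanTail x)
  have hprod : ∏ i, p i (euclideanTail x)
      = marginal F (euclideanTail x) / marginal G (T (euclideanTail x)) := by
    rw [← hK.mul_prod_diag, mul_div_cancel_left₀ _ hmG.ne']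
  simp only [Fin.prod_univ_succ, knotheDiag, Fin.cons_zero, Fin.cons_succ, hprod]
  field_simp

lemma lintegral_slice_knotheMap (x : EuclideanSpace ℝ (Fin n))
    {φ : EuclideanSpace ℝ (Fin (n + 1)) → ENNReal} (hφ : Measurable φ) :
    ∫⁻ s, ENNReal.ofReal (slice F x s) * φ (knotheMap F G T (euclideanCons s x))
      = ENNReal.ofReal (marginal F x) * fiberAverage G φ (T x) := by
  have htransport := hF.densityFamily_slice.lintegral_comp_monotoneTransport
    hG.densityFamily_slice T x (φ := fun t => φ (euclideanCons t (T x)))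
    (hφ.comp (continuous_euclideanCons.measurable.comp measurable_prodMk_left))
  simpa only [mul_comm (ENNReal.ofReal (slice _ _ _))] using! htransport

lemma measurePreserving_knotheMap (hT : Continuous T)
    (hmp : MeasurePreserving T (volume.withDensity fun x => ENNReal.ofReal (marginal F x))
      (volume.withDensity fun x => ENNReal.ofReal (marginal G x))) :
    MeasurePreserving (knotheMap F G T) (volume.withDensity fun x => ENNReal.ofReal (F x))
      (volume.withDensity fun x => ENNReal.ofReal (G x)) := by
  have hmT : Measurable (knotheMap F G T) := (continuous_knotheMap hF hG hT).measurable
  have hFm := hF.continuous.measurable.ennreal_ofReal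
  have hGm := hG.continuous.measurable.ennreal_ofReal
  refine ⟨hmT, Measure.ext_of_lintegral _ fun φ hφ => ?_⟩
  have hφT : Measurable fun x => φ (knotheMap F G T x) := hφ.comp hmT
  have hψ := measurable_fiberAverage hG hφ
  have hψT : Measurable fun x => fiberAverage G φ (T x) := hψ.comp hT.measurable
  have hpush := hmp.lintegral_comp hψ
  rw [lintegral_withDensity_eq_lintegral_mul _
      hF.transportDensity_marginal.continuous.measurable.ennreal_ofReal hψT,
    lintegral_withDensity_eq_lintegral_mul _
      hG.transportDensity_marginal.continuous.measurable.ennreal_ofReal hψ] at hpush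
  rw [lintegral_map hφ hmT, lintegral_withDensity_eq_lintegral_mul _ hFm hφT,
    lintegral_withDensity_eq_lintegral_mul _ hGm hφ,
    lintegral_eq_lintegral_euclideanCons (hFm.mul hφT),
    lintegral_eq_lintegral_euclideanCons (hGm.mul hφ)]
  exact (lintegral_congr fun x => lintegral_slice_knotheMap hF hG x hφ).trans
    (hpush.trans (lintegral_congr fun y => ofReal_marginal_mul_fiberAverage hG φ y))

lemma knotheTransport_knotheMap {p : Fin n → EuclideanSpace ℝ (Fin n) → ℝ}
    (hK : KnotheTransport (marginal F) (marginal G) T p) :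
    KnotheTransport F G (knotheMap F G T) (knotheDiag F G T p) where
  continuous := continuous_knotheMap hF hG hK.continuous
  continuous_diag := Fin.cases (continuous_knotheDiag_zero hF hG hK.continuous p)
    fun i => (hK.continuous_diag i).comp continuous_euclideanTail
  diag_pos := Fin.cases
    (fun _ => mul_pos (inv_pos.2 (div_pos (hG.pos _) (hG.transportDensity_marginal.pos _)))
      (div_pos (hF.pos _) (hF.transportDensity_marginal.pos _)))
    fun i _ => hK.diag_pos i _
  hasLineDerivAt := Fin.cases (hasLineDerivAt_knotheMap_zero hF hG p) fun i x => by
    simpa only [HasLineDerivAt, knotheMap, knotheDiag, euclideanCons_succ, Fin.cons_succ,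
      euclideanTail_add_smul_single_succ] using hK.hasLineDerivAt i (euclideanTail x)
  mul_prod_diag := mul_prod_knotheDiag hF hG hK
  measurePreserving := measurePreserving_knotheMap hF hG hK.continuous hK.measurePreserving

end Succ

theorem exists_knotheTransport : ∀ {n : ℕ} {F G : EuclideanSpace ℝ (Fin n) → ℝ},
    TransportDensity F → TransportDensity G → ∫ x, F x = ∫ x, G x →
      ∃ T p, KnotheTransport F G T p
  | 0, F, G, _, _, hFG => by
    have hF_eq_G : F = G := by
      funext x
      simpa [Subsingleton.elim x 0, volume_euclideanSpace_eq_dirac] using hFG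
    subst hF_eq_G
    exact ⟨id, fun i => i.elim0, continuous_id, fun i => i.elim0, fun i => i.elim0,
      fun i => i.elim0, by simp, MeasurePreserving.id _⟩
  | n + 1, F, G, hF, hG, hFG => by
    obtain ⟨T, p, hK⟩ := exists_knotheTransport hF.transportDensity_marginal
      hG.transportDensity_marginal (by rw [hF.integral_marginal, hG.integral_marginal, hFG])
    exact ⟨_, _, knotheTransport_knotheMap hF hG hK⟩

namespace KnotheTransport

variable {F G : EuclideanSpace ℝ (Fin n) → ℝ}
  {T : EuclideanSpace ℝ (Fin n) → EuclideanSpace ℝ (Fin n)}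
  {p : Fin n → EuclideanSpace ℝ (Fin n) → ℝ}

lemma mul_rpow_div_le_sum_diag (hK : KnotheTransport F G T p) {x : EuclideanSpace ℝ (Fin n)}
    (hx : 0 < G (T x)) : n * (F x / G (T x)) ^ (n : ℝ)⁻¹ ≤ ∑ i, p i x := by
  rcases Nat.eq_zero_or_pos n with rfl | hn
  · simp
  have hn' : (0 : ℝ) < n := Nat.cast_pos.2 hn
  have hamgm := Real.geom_mean_le_arith_mean Finset.univ (fun _ => 1) (fun i => p i x)
    (fun _ _ => zero_le_one) (by simpa using hn) fun i _ => (hK.diag_pos i x).le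
  simp only [Real.rpow_one, one_mul, Finset.sum_const, Finset.card_univ, Fintype.card_fin,
    nsmul_eq_mul, mul_one] at hamgm
  rwa [le_div_iff₀' hn', ← mul_div_cancel_left₀ (∏ i, p i x) hx.ne', hK.mul_prod_diag] at hamgm

lemma integrable_mul_comp (hK : KnotheTransport F G T p) (hF : TransportDensity F)
    (hG : TransportDensity G) {φ : EuclideanSpace ℝ (Fin n) → ℝ}
    (hφ : Integrable fun y => G y * φ y) : Integrable fun x => F x * φ (T x) := by
  rw [← integrable_withDensity_ofReal_iff hG.continuous.measurable fun y => (hG.pos y).le] at hφ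
  rw [← integrable_withDensity_ofReal_iff hF.continuous.measurable fun x => (hF.pos x).le]
  exact hK.measurePreserving.integrable_comp_of_integrable hφ

lemma integral_mul_comp (hK : KnotheTransport F G T p) (hF : TransportDensity F)
    (hG : TransportDensity G) {φ : EuclideanSpace ℝ (Fin n) → ℝ} (hφ : StronglyMeasurable φ) :
    ∫ x, F x * φ (T x) = ∫ y, G y * φ y := by
  rw [← integral_withDensity_ofReal hF.continuous.measurable fun x => (hF.pos x).le,
    ← integral_withDensity_ofReal hG.continuous.measurable fun y => (hG.pos y).le,
    ← hK.measurePreserving.map_eq]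
  exact (integral_map hK.measurePreserving.aemeasurable hφ.aestronglyMeasurable).symm

lemma integral_mul_sum_diag (hK : KnotheTransport F G T p) {h : EuclideanSpace ℝ (Fin n) → ℝ}
    (hh : ContDiff ℝ 1 h) (hs : HasCompactSupport h) :
    ∫ x, h x * ∑ i, p i x = -∫ x, fderiv ℝ h x (T x) := by
  let e (i : Fin n) : EuclideanSpace ℝ (Fin n) := EuclideanSpace.single i 1
  have hT (i : Fin n) : Continuous fun x => T x i :=
    (EuclideanSpace.proj (𝕜 := ℝ) i).continuous.comp hK.continuous
  have hd (i : Fin n) : Continuous fun x => fderiv ℝ h x (e i) :=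
    (hh.continuous_fderiv one_ne_zero).clm_apply continuous_const
  have hsd (i : Fin n) : HasCompactSupport fun x => fderiv ℝ h x (e i) :=
    (hs.fderiv ℝ).comp_left (g := fun L : EuclideanSpace ℝ (Fin n) →L[ℝ] ℝ => L (e i)) rfl
  have hint_dT (i : Fin n) : Integrable fun x => fderiv ℝ h x (e i) * T x i :=
    ((hd i).mul (hT i)).integrable_of_hasCompactSupport (hsd i).mul_right
  have hint_p (i : Fin n) : Integrable fun x => h x * p i x :=
    (hh.continuous.mul (hK.continuous_diag i)).integrable_of_hasCompactSupport hs.mul_right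
  have hint_T (i : Fin n) : Integrable fun x => h x * T x i :=
    (hh.continuous.mul (hT i)).integrable_of_hasCompactSupport hs.mul_right
  have hparts (i : Fin n) : ∫ x, h x * p i x = -∫ x, fderiv ℝ h x (e i) * T x i :=
    integral_bilinear_hasLineDerivAt_right_eq_neg_left_of_integrable
      (B := ContinuousLinearMap.mul ℝ ℝ) (hint_dT i) (hint_p i) (hint_T i)
      (fun x _ => (hh.differentiable one_ne_zero x).hasFDerivAt.hasLineDerivAt _)
      (fun x _ => hK.hasLineDerivAt i x)
  have hcoord (x : EuclideanSpace ℝ (Fin n)) :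
      fderiv ℝ h x (T x) = ∑ i, fderiv ℝ h x (e i) * T x i := by
    have hTx : T x = ∑ i, T x i • e i := by
      ext j
      simp [e, Pi.single_apply]
    conv_lhs => rw [hTx]
    simp only [map_sum, map_smul, smul_eq_mul, mul_comm]
  simp only [hcoord, Finset.mul_sum]
  rw [integral_finsetSum _ fun i _ => hint_p i, integral_finsetSum _ fun i _ => hint_dT i,
    ← Finset.sum_neg_distrib]
  exact Finset.sum_congr rfl fun i _ => hparts i

end KnotheTransport

end KnotheTransport

/-! ### Hölder estimates and cutoffs -/

section SquareIntegrable

variable {α : Type*} [MeasurableSpace α] {μ : Measure α} {f g : α → ℝ}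

lemma integral_mul_le_sqrt_mul_sqrt (hf : MemLp f 2 μ) (hg : MemLp g 2 μ) :
    ∫ x, f x * g x ∂μ ≤ √(∫ x, f x ^ 2 ∂μ) * √(∫ x, g x ^ 2 ∂μ) := by
  have holder := integral_mul_norm_le_Lp_mul_Lq Real.HolderConjugate.two_two
    (by simpa using hf) (by simpa using hg)
  calc ∫ x, f x * g x ∂μ ≤ ∫ x, ‖f x‖ * ‖g x‖ ∂μ :=
        integral_mono (hf.integrable_mul hg) (hf.norm.integrable_mul hg.norm) fun x =>
          (le_abs_self _).trans_eq (abs_mul _ _)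
    _ ≤ √(∫ x, f x ^ 2 ∂μ) * √(∫ x, g x ^ 2 ∂μ) := by
        simpa [Real.sqrt_eq_rpow] using holder

lemma integral_add_sq_le (hf : MemLp f 2 μ) (hg : MemLp g 2 μ) :
    ∫ x, (f x + g x) ^ 2 ∂μ ≤ (√(∫ x, f x ^ 2 ∂μ) + √(∫ x, g x ^ 2 ∂μ)) ^ 2 := by
  have hsq : Integrable (fun x => f x ^ 2 + g x ^ 2) μ := hf.integrable_sq.add hg.integrable_sq
  have hfg : Integrable (fun x => f x * g x) μ := hf.integrable_mul hg
  calc ∫ x, (f x + g x) ^ 2 ∂μ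
      = ∫ x, (f x ^ 2 + g x ^ 2 + 2 * (f x * g x)) ∂μ := integral_congr_ae <|
        ae_of_all _ fun x => by ring
    _ = ∫ x, f x ^ 2 ∂μ + ∫ x, g x ^ 2 ∂μ + 2 * ∫ x, f x * g x ∂μ := by
        rw [integral_add hsq (hfg.const_mul 2),
          integral_add hf.integrable_sq hg.integrable_sq, integral_const_mul]
    _ ≤ ∫ x, f x ^ 2 ∂μ + ∫ x, g x ^ 2 ∂μ
          + 2 * (√(∫ x, f x ^ 2 ∂μ) * √(∫ x, g x ^ 2 ∂μ)) := by
        gcongr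
        exact integral_mul_le_sqrt_mul_sqrt hf hg
    _ = (√(∫ x, f x ^ 2 ∂μ) + √(∫ x, g x ^ 2 ∂μ)) ^ 2 := by
        rw [add_sq, Real.sq_sqrt (integral_nonneg fun x => sq_nonneg _),
          Real.sq_sqrt (integral_nonneg fun x => sq_nonneg _)]
        ring

lemma integral_mul_sq_le_rpow_mul_rpow {d : ℝ} (hd : 2 < d)
    (hf : MemLp f (ENNReal.ofReal (2 * d / (d - 2))) μ) (hg : MemLp g (ENNReal.ofReal d) μ) :
    ∫ x, (f x * g x) ^ 2 ∂μ ≤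
      (∫ x, |f x| ^ (2 * d / (d - 2)) ∂μ) ^ ((d - 2) / d) * (∫ x, |g x| ^ d ∂μ) ^ (2 / d) := by
  have hd2 : 0 < d - 2 := sub_pos.2 hd
  have conj : (d / (d - 2)).HolderConjugate (d / 2) := by
    rw [Real.holderConjugate_iff, lt_div_iff₀ hd2]
    exact ⟨by linarith, by field_simp; ring⟩
  have sq_rpow (a r : ℝ) : (|a| ^ (2 : ℝ)) ^ r = |a| ^ (2 * r) :=
    (Real.rpow_mul (abs_nonneg a) 2 r).symm
  have memLp_sq {h : α → ℝ} {r : ℝ} (hh : MemLp h (ENNReal.ofReal (2 * r)) μ) :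
      MemLp (fun x => |h x| ^ (2 : ℝ)) (ENNReal.ofReal r) μ := by
    have key := hh.norm_rpow_div 2
    rw [ENNReal.ofReal_mul zero_le_two, ENNReal.ofReal_ofNat, mul_comm,
      ENNReal.mul_div_cancel_right two_ne_zero ENNReal.ofNat_ne_top] at key
    simpa only [ENNReal.toReal_ofNat, Real.norm_eq_abs] using key
  have holder := integral_mul_le_Lp_mul_Lq_of_nonneg conj
    (ae_of_all μ fun x => Real.rpow_nonneg (abs_nonneg (f x)) 2)
    (ae_of_all μ fun x => Real.rpow_nonneg (abs_nonneg (g x)) 2)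
    (memLp_sq (by rwa [← mul_div_assoc])) (memLp_sq (by rwa [mul_div_cancel₀ d two_ne_zero]))
  simp only [sq_rpow, ← mul_div_assoc, one_div_div, mul_div_cancel_left₀ d (two_ne_zero' ℝ),
    ← Real.mul_rpow (abs_nonneg _) (abs_nonneg _), ← abs_mul] at holder
  simpa [mul_pow] using holder

end SquareIntegrable

lemma tendsto_setIntegral_le_norm_atTop_zero {E : Type*} [NormedAddCommGroup E]
    [MeasurableSpace E] [OpensMeasurableSpace E] {μ : Measure E} {f : E → ℝ}
    (hf : Integrable f μ) :
    Tendsto (fun R : ℝ => ∫ x in {x | R ≤ ‖x‖}, f x ∂μ) atTop (nhds 0) := by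
  have tail := tendsto_setIntegral_of_antitone (s := fun R : ℝ => {x : E | R ≤ ‖x‖})
    (fun R => (isClosed_le continuous_const continuous_norm).measurableSet)
    (fun a b hab x hx => le_trans hab hx) ⟨0, hf.integrableOn⟩
  have empty : ⋂ R : ℝ, {x : E | R ≤ ‖x‖} = ∅ :=
    eq_empty_of_forall_notMem fun x hx =>
      (lt_add_one ‖x‖).not_ge (mem_iInter.1 hx (‖x‖ + 1))
  simpa only [empty, Measure.restrict_empty, integral_zero_measure] using tail

section Cutoff

variable {E : Type*} [NormedAddCommGroup E] [NormedSpace ℝ E] [HasContDiffBump E]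

/-- The smooth cutoff at scale `R > 0`: it is `1` on the ball of radius `R` and supported in the
ball of radius `2R`. -/
def cutoff (R : ℝ) (x : E) : ℝ :=
  (⟨1, 2, one_pos, one_lt_two⟩ : ContDiffBump (0 : E)) (R⁻¹ • x)

lemma cutoff_nonneg (R : ℝ) (x : E) : 0 ≤ cutoff R x := ContDiffBump.nonneg _

lemma cutoff_le_one (R : ℝ) (x : E) : cutoff R x ≤ 1 := ContDiffBump.le_one _

lemma cutoff_eq_one {R : ℝ} (hR : 0 < R) {x : E} (hx : ‖x‖ ≤ R) : cutoff R x = 1 := by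
  apply ContDiffBump.one_of_mem_closedBall
  rwa [mem_closedBall_zero_iff, norm_smul, norm_inv, Real.norm_of_nonneg hR.le,
    inv_mul_le_iff₀ hR, mul_one]

lemma contDiff_cutoff (R : ℝ) : ContDiff ℝ 1 (cutoff R : E → ℝ) :=
  (ContDiffBump.contDiff _).comp (contDiff_const_smul _)

lemma hasCompactSupport_cutoff [FiniteDimensional ℝ E] {R : ℝ} (hR : R ≠ 0) :
    HasCompactSupport (cutoff R : E → ℝ) :=
  (ContDiffBump.hasCompactSupport _).comp_smul (inv_ne_zero hR)

lemma hasCompactSupport_fderiv_cutoff [FiniteDimensional ℝ E] {R : ℝ} (hR : R ≠ 0) :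
    HasCompactSupport (fderiv ℝ (cutoff R : E → ℝ)) :=
  (hasCompactSupport_cutoff hR).fderiv ℝ

lemma fderiv_cutoff_eq_zero {R : ℝ} {x : E} (hx : ‖x‖ < R) : fderiv ℝ (cutoff R) x = 0 := by
  have eq_one : cutoff R =ᶠ[nhds x] fun _ => (1 : ℝ) := by
    filter_upwards [(isOpen_lt continuous_norm continuous_const).mem_nhds hx] with y hy
    exact cutoff_eq_one ((norm_nonneg x).trans_lt hx) (le_of_lt hy)
  rw [eq_one.fderiv_eq, fderiv_fun_const, Pi.zero_apply]

lemma fderiv_cutoff (R : ℝ) (x : E) :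
    fderiv ℝ (cutoff R) x = R⁻¹ • fderiv ℝ (cutoff 1) (R⁻¹ • x) := by
  have scale : (cutoff R : E → ℝ) = fun y => cutoff 1 (R⁻¹ • y) := by
    funext y
    rw [cutoff, cutoff, inv_one, one_smul]
  rw [scale]
  exact fderiv_comp_smul _

variable [MeasurableSpace E] [BorelSpace E] {μ : Measure E}

lemma tendsto_integral_cutoff_rpow_mul {p : ℝ} (hp : 0 ≤ p) {f : E → ℝ} (hf : Integrable f μ) :
    Tendsto (fun R => ∫ x, cutoff R x ^ p * f x ∂μ) atTop (nhds (∫ x, f x ∂μ)) := by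
  have hcont (R : ℝ) : Continuous fun x : E => cutoff R x ^ p :=
    (contDiff_cutoff R).continuous.rpow_const fun x => Or.inr hp
  refine tendsto_integral_filter_of_dominated_convergence (fun x => ‖f x‖)
    (Eventually.of_forall fun R => (hcont R).aestronglyMeasurable.mul hf.1)
    (Eventually.of_forall fun R => ae_of_all _ fun x => ?_) hf.norm (ae_of_all _ fun x => ?_)
  · rw [norm_mul, Real.norm_of_nonneg (Real.rpow_nonneg (cutoff_nonneg R x) p)]
    exact mul_le_of_le_one_left (norm_nonneg _)
      (Real.rpow_le_one (cutoff_nonneg R x) (cutoff_le_one R x) hp)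
  · refine tendsto_nhds_of_eventually_eq ?_
    filter_upwards [eventually_gt_atTop 0, eventually_ge_atTop ‖x‖] with R hR hx
    rw [cutoff_eq_one hR hx, Real.one_rpow, one_mul]

variable [FiniteDimensional ℝ E] [μ.IsAddHaarMeasure]

lemma integral_norm_fderiv_cutoff_pow_finrank {R : ℝ} (hR : 0 < R) :
    ∫ x : E, ‖fderiv ℝ (cutoff R) x‖ ^ Module.finrank ℝ E ∂μ =
      ∫ x : E, ‖fderiv ℝ (cutoff 1) x‖ ^ Module.finrank ℝ E ∂μ := by
  simp only [fderiv_cutoff R, norm_smul, mul_pow, integral_const_mul]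
  rw [Measure.integral_comp_inv_smul_of_nonneg μ
    (fun x : E => ‖fderiv ℝ (cutoff 1) x‖ ^ Module.finrank ℝ E) hR.le, smul_eq_mul,
    ← mul_assoc, ← mul_pow, norm_inv, Real.norm_of_nonneg hR.le, inv_mul_cancel₀ hR.ne',
    one_pow, one_mul]

lemma memLp_mul_fderiv_cutoff {w : E → ℝ} (hw : Continuous w) {R : ℝ} (hR : R ≠ 0)
    (p : ENNReal) : MemLp (fun x => w x * ‖fderiv ℝ (cutoff R) x‖) p μ := by
  have hcont := (contDiff_cutoff (E := E) R).continuous_fderiv one_ne_zero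
  have hsupp := (hasCompactSupport_fderiv_cutoff (E := E) hR).norm
  exact (hw.mul hcont.norm).memLp_of_hasCompactSupport hsupp.mul_left

-- The `L^d` norm of `∇χ_R` does not depend on `R`, so Hölder leaves a tail of `∫ |w|^(2d/(d-2))`.
lemma tendsto_integral_mul_fderiv_cutoff_sq (hE : 2 < Module.finrank ℝ E) {w : E → ℝ}
    (hw : MemLp w (ENNReal.ofReal (2 * (Module.finrank ℝ E : ℝ) / (Module.finrank ℝ E - 2))) μ) :
    Tendsto (fun R => ∫ x, (w x * ‖fderiv ℝ (cutoff R) x‖) ^ 2 ∂μ) atTop (nhds 0) := by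
  set d : ℝ := (Module.finrank ℝ E : ℝ)
  have hd : 2 < d := Nat.ofNat_lt_cast.2 hE
  have hd2 : 0 < d - 2 := sub_pos.2 hd
  have hq : 0 < 2 * d / (d - 2) := div_pos (by positivity) hd2
  have hwq : Integrable (fun x => |w x| ^ (2 * d / (d - 2))) μ := by
    simpa only [ENNReal.toReal_ofReal hq.le, Real.norm_eq_abs] using
      hw.integrable_norm_rpow (ENNReal.ofReal_pos.2 hq).ne' ENNReal.ofReal_ne_top
  set K : ℝ := (∫ x : E, ‖fderiv ℝ (cutoff 1) x‖ ^ Module.finrank ℝ E ∂μ) ^ (2 / d)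
  have tail : Tendsto (fun R : ℝ =>
      (∫ x in {x | R ≤ ‖x‖}, |w x| ^ (2 * d / (d - 2)) ∂μ) ^ ((d - 2) / d) * K)
      atTop (nhds 0) := by
    have hexp : 0 < (d - 2) / d := div_pos hd2 (by positivity)
    simpa [Real.zero_rpow hexp.ne'] using
      ((tendsto_setIntegral_le_norm_atTop_zero hwq).rpow_const (Or.inr hexp.le)).mul_const K
  refine squeeze_zero' (Eventually.of_forall fun R => integral_nonneg fun x => sq_nonneg _)
    ?_ tail
  filter_upwards [eventually_gt_atTop 0] with R hR
  have vanish (x : E) (hx : x ∉ {x | R ≤ ‖x‖}) : ‖fderiv ℝ (cutoff R) x‖ = 0 :=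
    norm_eq_zero.2 (fderiv_cutoff_eq_zero (not_le.1 hx))
  have hcont := (contDiff_cutoff (E := E) R).continuous_fderiv one_ne_zero
  have hgrad : MemLp (fun x : E => ‖fderiv ℝ (cutoff R) x‖) (ENNReal.ofReal d) μ :=
    hcont.norm.memLp_of_hasCompactSupport (hasCompactSupport_fderiv_cutoff hR.ne').norm
  have hK : (∫ x in {x | R ≤ ‖x‖}, |‖fderiv ℝ (cutoff R) x‖| ^ d ∂μ) ^ (2 / d) = K := by
    rw [setIntegral_eq_integral_of_forall_compl_eq_zero fun x hx => by
      rw [vanish x hx, abs_zero, Real.zero_rpow (by positivity)]]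
    simp only [abs_norm, d, Real.rpow_natCast, integral_norm_fderiv_cutoff_pow_finrank hR, K]
  rw [← setIntegral_eq_integral_of_forall_compl_eq_zero (s := {x | R ≤ ‖x‖}) fun x hx => by
    rw [vanish x hx, mul_zero, zero_pow two_ne_zero], ← hK]
  exact integral_mul_sq_le_rpow_mul_rpow hd (hw.restrict _) (hgrad.restrict _)

end Cutoff

/-! ### The ground state -/

lemma norm_gradient {E : Type*} [NormedAddCommGroup E] [InnerProductSpace ℝ E]
    [CompleteSpace E] (f : E → ℝ) (x : E) : ‖gradient f x‖ = ‖fderiv ℝ f x‖ :=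
  (InnerProductSpace.toDual ℝ E).symm.norm_map _

/-- The Sobolev exponent `2N/(N-2)` of the embedding of `Ḣ¹(ℝ^N)`. -/
def criticalExponent (N : ℕ) : ℝ := 2 * (N : ℝ) / ((N : ℝ) - 2)

/-- The function `1 + |x|²/(N(N-2))`, of which the ground state `W` is a power. -/
def bracket (N : ℕ) (x : EuclideanSpace ℝ (Fin N)) : ℝ :=
  1 + ‖x‖ ^ 2 / ((N : ℝ) * ((N : ℝ) - 2))

/-- The density `W ^ (2N/(N-2))`, written as an inverse integer power. -/
def groundDensity (N : ℕ) (x : EuclideanSpace ℝ (Fin N)) : ℝ := (bracket N x ^ N)⁻¹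

/-- The critical mass `∫ W ^ (2N/(N-2))`, which is also the Dirichlet energy `∫ |∇W|²`. -/
def groundMass (N : ℕ) : ℝ := ∫ x, groundDensity N x

section GroundState

variable {N : ℕ}

lemma contDiff_bracket : ContDiff ℝ 1 (bracket N) :=
  contDiff_const.add ((contDiff_norm_sq ℝ).div_const _)

variable (hN : 2 < N)
include hN

lemma cast_sub_two_pos : (0 : ℝ) < (N : ℝ) - 2 := sub_pos.2 (Nat.ofNat_lt_cast.2 hN)

lemma cast_mul_cast_sub_two_pos : (0 : ℝ) < (N : ℝ) * ((N : ℝ) - 2) :=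
  mul_pos (Nat.cast_pos.2 (by omega)) (cast_sub_two_pos hN)

lemma one_le_cast_mul_cast_sub_two : (1 : ℝ) ≤ (N : ℝ) * ((N : ℝ) - 2) := by
  have : (3 : ℝ) ≤ N := by exact_mod_cast hN
  nlinarith

lemma criticalExponent_pos : 0 < criticalExponent N :=
  div_pos (mul_pos two_pos (Nat.cast_pos.2 (by omega))) (cast_sub_two_pos hN)

lemma one_le_bracket (x : EuclideanSpace ℝ (Fin N)) : 1 ≤ bracket N x :=
  le_add_of_nonneg_right (div_nonneg (sq_nonneg _) (cast_mul_cast_sub_two_pos hN).le)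

lemma bracket_pos (x : EuclideanSpace ℝ (Fin N)) : 0 < bracket N x :=
  one_pos.trans_le (one_le_bracket hN x)

lemma one_add_norm_sq_le_mul_bracket (x : EuclideanSpace ℝ (Fin N)) :
    1 + ‖x‖ ^ 2 ≤ (N : ℝ) * ((N : ℝ) - 2) * bracket N x := by
  rw [bracket, mul_add, mul_one, mul_div_cancel₀ _ (cast_mul_cast_sub_two_pos hN).ne']
  gcongr
  exact one_le_cast_mul_cast_sub_two hN

lemma groundDensity_pos (x : EuclideanSpace ℝ (Fin N)) : 0 < groundDensity N x :=
  inv_pos.2 (pow_pos (bracket_pos hN x) N)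

lemma continuous_groundDensity : Continuous (groundDensity N) :=
  (contDiff_bracket.continuous.pow N).inv₀ fun x => (pow_pos (bracket_pos hN x) N).ne'

lemma W_pos (x : EuclideanSpace ℝ (Fin N)) : 0 < W N x :=
  Real.rpow_pos_of_pos (bracket_pos hN x) _

lemma contDiff_W : ContDiff ℝ 1 (W N) :=
  contDiff_bracket.rpow_const_of_ne fun x => (bracket_pos hN x).ne'

lemma W_rpow_criticalExponent (x : EuclideanSpace ℝ (Fin N)) :
    W N x ^ criticalExponent N = groundDensity N x := by
  have hN2 := cast_sub_two_pos hN
  have hJ := (bracket_pos hN x).le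
  rw [groundDensity, ← Real.rpow_natCast, ← Real.rpow_neg hJ]
  refine (Real.rpow_mul hJ _ _).symm.trans (congrArg _ ?_)
  rw [criticalExponent]
  field_simp

lemma norm_fderiv_W_sq (x : EuclideanSpace ℝ (Fin N)) :
    ‖fderiv ℝ (W N) x‖ ^ 2 = ‖x‖ ^ 2 * groundDensity N x / (N : ℝ) ^ 2 := by
  have hN2 := cast_sub_two_pos hN
  have hJ := bracket_pos hN x
  have deriv_bracket : HasFDerivAt (bracket N)
      ((((N : ℝ) * ((N : ℝ) - 2))⁻¹ * 2) • innerSL ℝ x) x := by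
    unfold bracket
    simpa only [div_eq_mul_inv, mul_smul, ofNat_smul_eq_nsmul ℝ] using
      ((hasStrictFDerivAt_norm_sq x).hasFDerivAt.mul_const ((N * ((N : ℝ) - 2))⁻¹)).const_add 1
  have deriv_W : HasFDerivAt (W N) _ x :=
    deriv_bracket.rpow_const (p := -(((N : ℝ) - 2) / 2)) (Or.inl hJ.ne')
  have density : (bracket N x ^ (-(((N : ℝ) - 2) / 2) - 1)) ^ 2 = groundDensity N x := by
    rw [groundDensity, ← Real.rpow_natCast, ← Real.rpow_mul hJ.le, ← Real.rpow_natCast,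
      ← Real.rpow_neg hJ.le]
    congr 1
    push_cast
    ring
  rw [deriv_W.fderiv, smul_smul, norm_smul, mul_pow, Real.norm_eq_abs, sq_abs,
    innerSL_apply_norm, ← density]
  field_simp

lemma integrable_inv_bracket_pow {k : ℕ} (hk : N < 2 * k) :
    Integrable fun x : EuclideanSpace ℝ (Fin N) => (bracket N x ^ k)⁻¹ := by
  have decay := integrable_rpow_neg_one_add_norm_sq (E := EuclideanSpace ℝ (Fin N))
    (μ := volume) (r := 2 * (k : ℝ)) (by rw [finrank_euclideanSpace_fin]; exact_mod_cast hk)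
  have hcont : Continuous fun x : EuclideanSpace ℝ (Fin N) => (bracket N x ^ k)⁻¹ :=
    (contDiff_bracket.continuous.pow k).inv₀ fun x => (pow_pos (bracket_pos hN x) k).ne'
  refine (decay.const_mul (((N : ℝ) * ((N : ℝ) - 2)) ^ k)).mono' hcont.aestronglyMeasurable
    (ae_of_all _ fun x => ?_)
  have hJ := pow_pos (bracket_pos hN x) k
  have hx : 0 < 1 + ‖x‖ ^ 2 := by positivity
  rw [Real.norm_of_nonneg (inv_pos.2 hJ).le, neg_div, mul_div_cancel_left₀ _ (two_ne_zero' ℝ),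
    Real.rpow_neg hx.le, Real.rpow_natCast, ← div_eq_mul_inv, le_div_iff₀ (pow_pos hx k),
    inv_mul_le_iff₀ hJ, mul_comm, ← mul_pow]
  exact pow_le_pow_left₀ hx.le (one_add_norm_sq_le_mul_bracket hN x) k

lemma integrable_groundDensity : Integrable (groundDensity N) :=
  integrable_inv_bracket_pow hN (by omega)

lemma integrable_norm_sq_mul_groundDensity :
    Integrable fun x : EuclideanSpace ℝ (Fin N) => ‖x‖ ^ 2 * groundDensity N x := by
  have lower := integrable_inv_bracket_pow hN (k := N - 1) (by omega)
  refine ((lower.sub (integrable_groundDensity hN)).const_mul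
    ((N : ℝ) * ((N : ℝ) - 2))).congr (ae_of_all _ fun x => ?_)
  have hJ := bracket_pos hN x
  have split : (bracket N x ^ (N - 1))⁻¹ = bracket N x * groundDensity N x := by
    rw [groundDensity, ← pow_sub_one_mul (by omega : N ≠ 0)]
    field_simp
  simp only [Pi.sub_apply]
  rw [split, ← sub_one_mul, ← mul_assoc, bracket, add_sub_cancel_left,
    mul_div_cancel₀ _ (cast_mul_cast_sub_two_pos hN).ne']

lemma transportDensity_groundDensity : TransportDensity (groundDensity N) where
  continuous := continuous_groundDensity hN
  pos := groundDensity_pos hN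
  exists_le := by
    refine ⟨((N : ℝ) * ((N : ℝ) - 2)) ^ N, fun x => ?_⟩
    have coord (i : Fin N) : 1 + x i ^ 2 ≤ (N : ℝ) * ((N : ℝ) - 2) * bracket N x := by
      refine le_trans ?_ (one_add_norm_sq_le_mul_bracket hN x)
      gcongr 1 + ?_
      exact sq_le_sq' (neg_le_of_abs_le (PiLp.norm_apply_le x i))
        (le_of_abs_le (PiLp.norm_apply_le x i))
    have prod_le : ∏ i, (1 + x i ^ 2) ≤ ((N : ℝ) * ((N : ℝ) - 2) * bracket N x) ^ N := by
      simpa using Finset.prod_le_prod (s := Finset.univ) (fun i _ => by positivity)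
        fun i _ => coord i
    have prod_pos : 0 < ∏ i, (1 + x i ^ 2) := Finset.prod_pos fun i _ => by positivity
    rw [groundDensity, Finset.prod_inv_distrib, ← div_eq_mul_inv, le_div_iff₀ prod_pos,
      inv_mul_le_iff₀ (pow_pos (bracket_pos hN x) N), mul_comm, ← mul_pow]
    exact prod_le

lemma groundMass_pos : 0 < groundMass N :=
  integral_pos_of_integrable_nonneg_nonzero (x := 0) (continuous_groundDensity hN)
    (integrable_groundDensity hN) (fun x => (groundDensity_pos hN x).le)
    (groundDensity_pos hN 0).ne'

end GroundState

section Pohozaev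

lemma hasDerivAt_pow_succ_mul_inv_pow {b : ℝ} (hb : 0 ≤ b) (k : ℕ) (r : ℝ) :
    HasDerivAt (fun r : ℝ => r ^ (k + 1) * ((1 + b * r ^ 2) ^ k)⁻¹)
      (r ^ k * ((k + 1 - (k - 1) * (b * r ^ 2)) * ((1 + b * r ^ 2) ^ (k + 1))⁻¹)) r := by
  have hJ : 1 + b * r ^ 2 ≠ 0 := by positivity
  have deriv_J : HasDerivAt (fun r : ℝ => 1 + b * r ^ 2) (b * (2 * r)) r := by
    simpa using ((hasDerivAt_pow 2 r).const_mul b).const_add 1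
  refine ((hasDerivAt_pow (k + 1) r).mul
    ((deriv_J.fun_pow k).fun_inv (pow_ne_zero k hJ))).congr_deriv ?_
  rcases k with _ | k
  · simp [hJ]
  · simp only [Nat.add_sub_cancel]
    push_cast
    field_simp
    ring

lemma tendsto_pow_succ_mul_inv_pow_atTop {b : ℝ} (hb : 0 < b) {k : ℕ} (hk : 1 < k) :
    Tendsto (fun r : ℝ => r ^ (k + 1) * ((1 + b * r ^ 2) ^ k)⁻¹) atTop (nhds 0) := by
  have decay : Tendsto (fun r : ℝ => (b ^ k)⁻¹ * (r ^ (k - 1))⁻¹) atTop (nhds 0) := by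
    simpa using (tendsto_pow_neg_atTop (𝕜 := ℝ) (by omega : k - 1 ≠ 0)).const_mul (b ^ k)⁻¹
  refine squeeze_zero' ?_ ?_ decay <;> filter_upwards [eventually_gt_atTop 0] with r hr
  · positivity
  have lower : (b * r ^ 2) ^ k ≤ (1 + b * r ^ 2) ^ k := by
    gcongr
    linarith
  calc r ^ (k + 1) * ((1 + b * r ^ 2) ^ k)⁻¹ ≤ r ^ (k + 1) * ((b * r ^ 2) ^ k)⁻¹ := by gcongr
    _ = (b ^ k)⁻¹ * (r ^ (k - 1))⁻¹ := by
        obtain ⟨m, rfl⟩ : ∃ m, k = m + 1 := ⟨k - 1, by omega⟩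
        rw [Nat.add_sub_cancel, mul_pow, ← pow_mul]
        field_simp
        ring

lemma integral_Ioi_pow_mul_inv_pow_eq_zero {b : ℝ} (hb : 0 < b) {k : ℕ} (hk : 1 < k)
    (hint : IntegrableOn (fun r : ℝ =>
      r ^ k * ((k + 1 - (k - 1) * (b * r ^ 2)) * ((1 + b * r ^ 2) ^ (k + 1))⁻¹)) (Ioi 0)) :
    ∫ r in Ioi (0 : ℝ),
      r ^ k * ((k + 1 - (k - 1) * (b * r ^ 2)) * ((1 + b * r ^ 2) ^ (k + 1))⁻¹) = 0 := by
  have ftc := integral_Ioi_of_hasDerivAt_of_tendsto'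
    (fun r _ => hasDerivAt_pow_succ_mul_inv_pow hb.le k r) hint
    (tendsto_pow_succ_mul_inv_pow_atTop hb hk)
  rwa [zero_pow k.succ_ne_zero, zero_mul, sub_zero] at ftc

variable {N : ℕ}

lemma groundDensity_mul_bracket_eq (x : EuclideanSpace ℝ (Fin N)) :
    groundDensity N x * bracket N x =
      groundDensity N x + ‖x‖ ^ 2 * groundDensity N x / ((N : ℝ) * ((N : ℝ) - 2)) := by
  rw [bracket]
  ring

variable (hN : 2 < N)
include hN

-- In polar coordinates the integrand is `d/dr (r^N (1 + r²/(N(N-2)))^(1-N))`.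
lemma integral_sub_norm_sq_mul_groundDensity :
    ∫ x : EuclideanSpace ℝ (Fin N), (N - ‖x‖ ^ 2 / N) * groundDensity N x = 0 := by
  obtain ⟨k, rfl⟩ : ∃ k, N = k + 1 := ⟨N - 1, by omega⟩
  set b : ℝ := (((k + 1 : ℕ) : ℝ) * (((k + 1 : ℕ) : ℝ) - 2))⁻¹
  have hb : 0 < b := inv_pos.2 (cast_mul_cast_sub_two_pos hN)
  have : Nontrivial (EuclideanSpace ℝ (Fin (k + 1))) :=
    Module.nontrivial_of_finrank_pos (R := ℝ) (by simp)
  let f (r : ℝ) : ℝ :=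
    (k + 1 - (k - 1) * (b * r ^ 2)) * ((1 + b * r ^ 2) ^ (k + 1))⁻¹
  have radial (x : EuclideanSpace ℝ (Fin (k + 1))) :
      (((k + 1 : ℕ) : ℝ) - ‖x‖ ^ 2 / (k + 1 : ℕ)) * groundDensity (k + 1) x = f ‖x‖ := by
    have hk : (k : ℝ) + 1 - 2 ≠ 0 := by exact_mod_cast (cast_sub_two_pos hN).ne'
    simp only [f, groundDensity, bracket, b, div_eq_inv_mul]
    congr 1
    push_cast
    field_simp
    ring
  have hint : Integrable fun x : EuclideanSpace ℝ (Fin (k + 1)) => f ‖x‖ := by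
    refine (((integrable_groundDensity hN).const_mul ((k + 1 : ℕ) : ℝ)).sub
      ((integrable_norm_sq_mul_groundDensity hN).div_const ((k + 1 : ℕ) : ℝ))).congr
      (ae_of_all _ fun x => ?_)
    simp only [← radial, Pi.sub_apply]
    ring
  rw [integrable_fun_norm_addHaar volume] at hint
  simp only [radial]
  rw [integral_fun_norm_addHaar volume f]
  simp only [finrank_euclideanSpace_fin, Nat.add_sub_cancel, smul_eq_mul, f] at hint ⊢
  rw [integral_Ioi_pow_mul_inv_pow_eq_zero hb (by omega) hint, mul_zero, smul_zero]

lemma integral_norm_sq_mul_groundDensity :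
    ∫ x : EuclideanSpace ℝ (Fin N), ‖x‖ ^ 2 * groundDensity N x = N ^ 2 * groundMass N := by
  have hN0 : (N : ℝ) ≠ 0 := Nat.cast_ne_zero.2 (by omega)
  have zero := integral_sub_norm_sq_mul_groundDensity hN
  simp only [sub_mul, div_mul_eq_mul_div] at zero
  rw [integral_sub ((integrable_groundDensity hN).const_mul _)
    ((integrable_norm_sq_mul_groundDensity hN).div_const _), integral_const_mul,
    integral_div, ← groundMass, sub_eq_zero, eq_div_iff hN0] at zero
  rw [← zero]
  ring

lemma integrable_groundDensity_mul_bracket :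
    Integrable fun x : EuclideanSpace ℝ (Fin N) => groundDensity N x * bracket N x := by
  simp only [groundDensity_mul_bracket_eq]
  exact (integrable_groundDensity hN).add
    ((integrable_norm_sq_mul_groundDensity hN).div_const _)

lemma integral_groundDensity_mul_bracket :
    ∫ x : EuclideanSpace ℝ (Fin N), groundDensity N x * bracket N x =
      (criticalExponent N / 2 + 1) * groundMass N := by
  have hN2 := cast_sub_two_pos hN
  simp only [groundDensity_mul_bracket_eq]
  rw [integral_add (integrable_groundDensity hN)
    ((integrable_norm_sq_mul_groundDensity hN).div_const _), integral_div,
    integral_norm_sq_mul_groundDensity hN, ← groundMass, criticalExponent]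
  field_simp
  ring

lemma integral_norm_fderiv_W_sq :
    ∫ x, ‖fderiv ℝ (W N) x‖ ^ 2 = groundMass N := by
  have hN0 : (N : ℝ) ≠ 0 := Nat.cast_ne_zero.2 (by omega)
  simp only [norm_fderiv_W_sq hN, integral_div, integral_norm_sq_mul_groundDensity hN]
  rw [mul_div_cancel_left₀ _ (pow_ne_zero 2 hN0)]

lemma memLp_fderiv_W : MemLp (fderiv ℝ (W N)) 2 := by
  have hcont := (contDiff_W hN).continuous_fderiv one_ne_zero
  rw [memLp_two_iff_integrable_sq_norm hcont.aestronglyMeasurable]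
  simp only [norm_fderiv_W_sq hN]
  exact (integrable_norm_sq_mul_groundDensity hN).div_const _

end Pohozaev

/-! ### The sharp Sobolev inequality -/

lemma neg_fderiv_mul_rpow_apply_le {E : Type*} [NormedAddCommGroup E] [NormedSpace ℝ E]
    {χ w : E → ℝ} {x : E} {r : ℝ} (hr : 0 ≤ r) (hχ : DifferentiableAt ℝ χ x)
    (hw : DifferentiableAt ℝ w x) (h0 : 0 ≤ χ x) (h1 : χ x ≤ 1) (hpos : 0 < w x) (v : E) :
    -fderiv ℝ (fun y => χ y * w y ^ (r + 1)) x v ≤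
      (r + 1) * (‖fderiv ℝ w x‖ * (w x ^ r * ‖v‖)) +
        w x * ‖fderiv ℝ χ x‖ * (w x ^ r * ‖v‖) := by
  have neg_apply_le (L : E →L[ℝ] ℝ) : -L v ≤ ‖L‖ * ‖v‖ := (neg_le_abs _).trans (L.le_opNorm v)
  have deriv : fderiv ℝ (fun y => χ y * w y ^ (r + 1)) x =
      χ x • ((r + 1) * w x ^ (r + 1 - 1)) • fderiv ℝ w x + w x ^ (r + 1) • fderiv ℝ χ x :=
    (hχ.hasFDerivAt.mul (hw.hasFDerivAt.rpow_const (Or.inl hpos.ne'))).fderiv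
  calc -fderiv ℝ (fun y => χ y * w y ^ (r + 1)) x v
      = χ x * ((r + 1) * w x ^ r * -fderiv ℝ w x v) + w x * w x ^ r * -fderiv ℝ χ x v := by
        rw [deriv, add_sub_cancel_right, Real.rpow_add_one hpos.ne']
        simp only [add_apply, smul_apply, smul_eq_mul]
        ring
    _ ≤ χ x * ((r + 1) * w x ^ r * (‖fderiv ℝ w x‖ * ‖v‖)) +
          w x * w x ^ r * (‖fderiv ℝ χ x‖ * ‖v‖) := by
        gcongr
        · exact neg_apply_le _
        · exact neg_apply_le _
    _ ≤ 1 * ((r + 1) * w x ^ r * (‖fderiv ℝ w x‖ * ‖v‖)) +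
          w x * w x ^ r * (‖fderiv ℝ χ x‖ * ‖v‖) := by gcongr
    _ = _ := by ring

lemma mul_rpow_half_sq {a : ℝ} (ha : 0 ≤ a) (q b : ℝ) : (a ^ (q / 2) * b) ^ 2 = a ^ q * b ^ 2 := by
  rw [mul_pow, ← Real.rpow_mul_natCast ha, Nat.cast_ofNat, div_mul_cancel₀ _ two_ne_zero]

lemma le_mul_rpow_half_of_le_rpow_mul {A a G q : ℝ} (hA : 0 < A) (ha : 0 < a) (hq : 0 < q)
    (h : A ≤ (A / a) ^ (2 / q) * G) : a ≤ A * (G / A) ^ (q / 2) := by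
  have base : (a / A) ^ (2 / q) ≤ G / A := by
    rwa [le_div_iff₀ hA, ← inv_div, Real.inv_rpow (by positivity),
      inv_mul_le_iff₀ (by positivity)]
  have powered := Real.rpow_le_rpow (by positivity) base (by positivity : 0 ≤ q / 2)
  rw [← Real.rpow_mul (by positivity), div_mul_div_cancel₀ hq.ne', div_self two_ne_zero,
    Real.rpow_one, div_le_iff₀ hA, mul_comm] at powered
  exact powered

lemma integral_norm_fderiv_const_mul_sq {E : Type*} [NormedAddCommGroup E] [NormedSpace ℝ E]
    [MeasurableSpace E] {μ : Measure E} {w : E → ℝ} (hw : Differentiable ℝ w) (t : ℝ) :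
    ∫ x, ‖fderiv ℝ (fun y => t * w y) x‖ ^ 2 ∂μ = t ^ 2 * ∫ x, ‖fderiv ℝ w x‖ ^ 2 ∂μ := by
  rw [← integral_const_mul]
  refine integral_congr_ae (ae_of_all _ fun x => ?_)
  simp only [fderiv_const_mul (hw x), norm_smul, mul_pow, Real.norm_eq_abs, sq_abs]

/-- The functions to which the transport proof of the Sobolev inequality applies directly: `C¹`,
positive, with finite Dirichlet energy, and dominated by the ground state so that `w ^ (2N/(N-2))`
can be transported to `groundDensity N`. -/
structure AdmissibleProfile (N : ℕ) (w : EuclideanSpace ℝ (Fin N) → ℝ) : Prop where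
  contDiff : ContDiff ℝ 1 w
  pos : ∀ x, 0 < w x
  exists_le : ∃ C, ∀ x, w x ≤ C * W N x
  memLp_fderiv : MemLp (fderiv ℝ w) 2

namespace AdmissibleProfile

variable {N : ℕ} {w : EuclideanSpace ℝ (Fin N) → ℝ}

lemma const_mul (hw : AdmissibleProfile N w) {t : ℝ} (ht : 0 < t) :
    AdmissibleProfile N fun x => t * w x where
  contDiff := contDiff_const.mul hw.contDiff
  pos x := mul_pos ht (hw.pos x)
  exists_le := by
    obtain ⟨C, hC⟩ := hw.exists_le
    refine ⟨t * C, fun x => ?_⟩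
    rw [mul_assoc]
    exact mul_le_mul_of_nonneg_left (hC x) ht.le
  memLp_fderiv := by
    have deriv : fderiv ℝ (fun x => t * w x) = t • fderiv ℝ w := by
      funext x
      exact fderiv_const_mul (hw.contDiff.differentiable one_ne_zero x) t
    rw [deriv]
    exact hw.memLp_fderiv.const_smul t

lemma continuous_rpow (hw : AdmissibleProfile N w) (r : ℝ) : Continuous fun x => w x ^ r :=
  hw.contDiff.continuous.rpow_const fun x => Or.inl (hw.pos x).ne'

lemma contDiff_cutoff_mul_rpow (hw : AdmissibleProfile N w) (R r : ℝ) :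
    ContDiff ℝ 1 fun x => cutoff R x * w x ^ r :=
  (contDiff_cutoff R).mul (hw.contDiff.rpow_const_of_ne fun x => (hw.pos x).ne')

lemma integrable_fderiv_cutoff_mul_apply (hw : AdmissibleProfile N w)
    {T : EuclideanSpace ℝ (Fin N) → EuclideanSpace ℝ (Fin N)} (hT : Continuous T) {R : ℝ}
    (hR : R ≠ 0) (r : ℝ) :
    Integrable fun x => fderiv ℝ (fun y => cutoff R y * w y ^ r) x (T x) := by
  have hderiv : HasCompactSupport (fderiv ℝ fun y => cutoff R y * w y ^ r) :=
    (hasCompactSupport_cutoff hR).mul_right.fderiv ℝ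
  refine (((hw.contDiff_cutoff_mul_rpow R r).continuous_fderiv one_ne_zero).clm_apply
    hT).integrable_of_hasCompactSupport (hderiv.mono fun x hx h0 => hx ?_)
  simp only [h0, zero_apply]

variable (hN : 2 < N)
include hN

lemma transportDensity (hw : AdmissibleProfile N w) :
    TransportDensity fun x => w x ^ criticalExponent N where
  continuous := hw.continuous_rpow _
  pos x := Real.rpow_pos_of_pos (hw.pos x) _
  exists_le := by
    obtain ⟨C, hC⟩ := hw.exists_le
    obtain ⟨K, hK⟩ := (transportDensity_groundDensity hN).exists_le
    have hC0 : 0 ≤ C := (pos_of_mul_pos_left ((hw.pos 0).trans_le (hC 0)) (W_pos hN 0).le).le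
    refine ⟨C ^ criticalExponent N * K, fun x => ?_⟩
    calc w x ^ criticalExponent N ≤ (C * W N x) ^ criticalExponent N :=
          Real.rpow_le_rpow (hw.pos x).le (hC x) (criticalExponent_pos hN).le
      _ = C ^ criticalExponent N * groundDensity N x := by
          rw [Real.mul_rpow hC0 (W_pos hN x).le, W_rpow_criticalExponent hN]
      _ ≤ C ^ criticalExponent N * K * ∏ i, (1 + x i ^ 2)⁻¹ := by
          rw [mul_assoc]
          exact mul_le_mul_of_nonneg_left (hK x) (Real.rpow_nonneg hC0 _)

lemma integral_rpow_pos (hw : AdmissibleProfile N w) : 0 < ∫ x, w x ^ criticalExponent N :=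
  integral_pos_of_integrable_nonneg_nonzero (x := 0) (hw.transportDensity hN).continuous
    (hw.transportDensity hN).integrable (fun x => ((hw.transportDensity hN).pos x).le)
    ((hw.transportDensity hN).pos 0).ne'

lemma memLp_criticalExponent (hw : AdmissibleProfile N w) :
    MemLp w (ENNReal.ofReal (criticalExponent N)) := by
  have hq := criticalExponent_pos hN
  rw [← integrable_norm_rpow_iff hw.contDiff.continuous.aestronglyMeasurable
    (ENNReal.ofReal_pos.2 hq).ne' ENNReal.ofReal_ne_top, ENNReal.toReal_ofReal hq.le]
  simpa only [Real.norm_of_nonneg (hw.pos _).le] using (hw.transportDensity hN).integrable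

section Transport

variable (hw : AdmissibleProfile N w)
  {T : EuclideanSpace ℝ (Fin N) → EuclideanSpace ℝ (Fin N)}
  {p : Fin N → EuclideanSpace ℝ (Fin N) → ℝ}
  (hK : KnotheTransport (fun x => w x ^ criticalExponent N) (groundDensity N) T p)
include hw hK

lemma mul_rpow_mul_bracket_le_sum_diag (x : EuclideanSpace ℝ (Fin N)) :
    N * (w x ^ (criticalExponent N / N) * bracket N (T x)) ≤ ∑ i, p i x := by
  have hJ := (bracket_pos hN (T x)).le
  refine le_trans (le_of_eq ?_) (hK.mul_rpow_div_le_sum_diag (groundDensity_pos hN (T x)))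
  rw [groundDensity, div_inv_eq_mul, Real.mul_rpow (Real.rpow_nonneg (hw.pos x).le _)
    (pow_nonneg hJ N), Real.pow_rpow_inv_natCast hJ (by omega), ← Real.rpow_mul (hw.pos x).le,
    ← div_eq_mul_inv]

lemma memLp_rpow_half_mul_norm :
    MemLp (fun x => w x ^ (criticalExponent N / 2) * ‖T x‖) 2 := by
  have hcont : Continuous fun x => w x ^ (criticalExponent N / 2) * ‖T x‖ :=
    (hw.continuous_rpow _).mul hK.continuous.norm
  rw [memLp_two_iff_integrable_sq hcont.aestronglyMeasurable]
  simp only [mul_rpow_half_sq (hw.pos _).le]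
  refine hK.integrable_mul_comp (hw.transportDensity hN) (transportDensity_groundDensity hN)
    (φ := fun y => ‖y‖ ^ 2) ?_
  simpa only [mul_comm] using integrable_norm_sq_mul_groundDensity hN

lemma integral_rpow_half_mul_norm_sq :
    ∫ x, (w x ^ (criticalExponent N / 2) * ‖T x‖) ^ 2 = N ^ 2 * groundMass N := by
  simp only [mul_rpow_half_sq (hw.pos _).le]
  rw [hK.integral_mul_comp (hw.transportDensity hN) (transportDensity_groundDensity hN)
    (φ := fun y => ‖y‖ ^ 2) (continuous_norm.pow 2).stronglyMeasurable,
    ← integral_norm_sq_mul_groundDensity hN]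
  exact integral_congr_ae (ae_of_all _ fun y => mul_comm _ _)

lemma integral_rpow_mul_bracket :
    ∫ x, w x ^ criticalExponent N * bracket N (T x) =
      (criticalExponent N / 2 + 1) * groundMass N := by
  rw [hK.integral_mul_comp (hw.transportDensity hN) (transportDensity_groundDensity hN)
    contDiff_bracket.continuous.stronglyMeasurable, integral_groundDensity_mul_bracket hN]

lemma integrable_rpow_mul_bracket :
    Integrable fun x => w x ^ criticalExponent N * bracket N (T x) :=
  hK.integrable_mul_comp (hw.transportDensity hN) (transportDensity_groundDensity hN)
    (integrable_groundDensity_mul_bracket hN)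

lemma mul_integral_cutoff_mul_bracket_le {R : ℝ} (hR : R ≠ 0) :
    N * ∫ x, cutoff R x * (w x ^ criticalExponent N * bracket N (T x)) ≤
      ∫ x, cutoff R x * w x ^ (criticalExponent N / 2 + 1) * ∑ i, p i x := by
  have hN2 := cast_sub_two_pos hN
  have hexp : criticalExponent N = criticalExponent N / 2 + 1 + criticalExponent N / N := by
    rw [criticalExponent]
    field_simp
    ring
  have hχ := (contDiff_cutoff (E := EuclideanSpace ℝ (Fin N)) R).continuous
  have hsupp := hasCompactSupport_cutoff (E := EuclideanSpace ℝ (Fin N)) hR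
  have hleft : Continuous fun x =>
      cutoff R x * (w x ^ criticalExponent N * bracket N (T x)) :=
    hχ.mul ((hw.continuous_rpow _).mul (contDiff_bracket.continuous.comp hK.continuous))
  have hright : Continuous fun x =>
      cutoff R x * w x ^ (criticalExponent N / 2 + 1) * ∑ i, p i x :=
    (hχ.mul (hw.continuous_rpow _)).mul (continuous_finsetSum _ fun i _ => hK.continuous_diag i)
  rw [← integral_const_mul]
  refine integral_mono ((hleft.integrable_of_hasCompactSupport hsupp.mul_right).const_mul _)
    (hright.integrable_of_hasCompactSupport hsupp.mul_right.mul_right) fun x => ?_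
  have hw0 := hw.pos x
  calc N * (cutoff R x * (w x ^ criticalExponent N * bracket N (T x)))
      = cutoff R x * w x ^ (criticalExponent N / 2 + 1) *
          (N * (w x ^ (criticalExponent N / N) * bracket N (T x))) := by
        conv_lhs => rw [hexp, Real.rpow_add hw0]
        ring
    _ ≤ cutoff R x * w x ^ (criticalExponent N / 2 + 1) * ∑ i, p i x :=
        mul_le_mul_of_nonneg_left (hw.mul_rpow_mul_bracket_le_sum_diag hN hK x)
          (mul_nonneg (cutoff_nonneg R x) (Real.rpow_nonneg hw0.le _))

lemma neg_integral_fderiv_apply_le {R : ℝ} (hR : R ≠ 0) :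
    -∫ x, fderiv ℝ (fun y => cutoff R y * w y ^ (criticalExponent N / 2 + 1)) x (T x) ≤
      ((criticalExponent N / 2 + 1) * √(∫ x, ‖fderiv ℝ w x‖ ^ 2) +
        √(∫ x, (w x * ‖fderiv ℝ (cutoff R) x‖) ^ 2)) * √(N ^ 2 * groundMass N) := by
  have hr : 0 ≤ criticalExponent N / 2 := (half_pos (criticalExponent_pos hN)).le
  have hT := hw.memLp_rpow_half_mul_norm hN hK
  have hgrad := hw.memLp_fderiv.norm
  have hcut := memLp_mul_fderiv_cutoff (μ := volume) hw.contDiff.continuous hR 2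
  rw [← integral_neg, ← hw.integral_rpow_half_mul_norm_sq hN hK]
  calc ∫ x, -fderiv ℝ (fun y => cutoff R y * w y ^ (criticalExponent N / 2 + 1)) x (T x)
      ≤ ∫ x, ((criticalExponent N / 2 + 1) *
            (‖fderiv ℝ w x‖ * (w x ^ (criticalExponent N / 2) * ‖T x‖)) +
          w x * ‖fderiv ℝ (cutoff R) x‖ * (w x ^ (criticalExponent N / 2) * ‖T x‖)) :=
        integral_mono (hw.integrable_fderiv_cutoff_mul_apply hK.continuous hR _).neg
          (((hgrad.integrable_mul hT).const_mul _).add (hcut.integrable_mul hT)) fun x =>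
            neg_fderiv_mul_rpow_apply_le hr
              ((contDiff_cutoff R).differentiable one_ne_zero x)
              (hw.contDiff.differentiable one_ne_zero x) (cutoff_nonneg R x)
              (cutoff_le_one R x) (hw.pos x) (T x)
    _ = (criticalExponent N / 2 + 1) *
            (∫ x, ‖fderiv ℝ w x‖ * (w x ^ (criticalExponent N / 2) * ‖T x‖)) +
          ∫ x, w x * ‖fderiv ℝ (cutoff R) x‖ * (w x ^ (criticalExponent N / 2) * ‖T x‖) := by
        rw [← integral_const_mul]
        exact integral_add ((hgrad.integrable_mul hT).const_mul _) (hcut.integrable_mul hT)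
    _ ≤ (criticalExponent N / 2 + 1) * (√(∫ x, ‖fderiv ℝ w x‖ ^ 2) *
            √(∫ x, (w x ^ (criticalExponent N / 2) * ‖T x‖) ^ 2)) +
          √(∫ x, (w x * ‖fderiv ℝ (cutoff R) x‖) ^ 2) *
            √(∫ x, (w x ^ (criticalExponent N / 2) * ‖T x‖) ^ 2) := by
        gcongr
        · exact integral_mul_le_sqrt_mul_sqrt hgrad hT
        · exact integral_mul_le_sqrt_mul_sqrt hcut hT
    _ = _ := by ring

end Transport

lemma groundMass_le_integral_norm_fderiv_sq (hw : AdmissibleProfile N w)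
    (hmass : ∫ x, w x ^ criticalExponent N = groundMass N) :
    groundMass N ≤ ∫ x, ‖fderiv ℝ w x‖ ^ 2 := by
  set r := criticalExponent N / 2 + 1
  have hr : 0 < r := by positivity [criticalExponent_pos hN]
  have hA := groundMass_pos hN
  have hN0 : (0 : ℝ) < N := Nat.cast_pos.2 (by omega)
  obtain ⟨T, p, hK⟩ := exists_knotheTransport (hw.transportDensity hN)
    (transportDensity_groundDensity hN) hmass
  have bound (R : ℝ) (hR : R ≠ 0) :
      N * ∫ x, cutoff R x ^ (1 : ℝ) * (w x ^ criticalExponent N * bracket N (T x)) ≤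
        (r * √(∫ x, ‖fderiv ℝ w x‖ ^ 2) + √(∫ x, (w x * ‖fderiv ℝ (cutoff R) x‖) ^ 2)) *
          √(N ^ 2 * groundMass N) := by
    simp only [Real.rpow_one]
    refine (hw.mul_integral_cutoff_mul_bracket_le hN hK hR).trans ?_
    rw [hK.integral_mul_sum_diag (hw.contDiff_cutoff_mul_rpow R r)
      (hasCompactSupport_cutoff hR).mul_right]
    exact hw.neg_integral_fderiv_apply_le hN hK hR
  have cutoff_term := tendsto_integral_mul_fderiv_cutoff_sq (μ := volume) (w := w)
    (by rwa [finrank_euclideanSpace_fin])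
    (by simpa only [finrank_euclideanSpace_fin] using! hw.memLp_criticalExponent hN)
  have limit := le_of_tendsto_of_tendsto
    ((tendsto_integral_cutoff_rpow_mul zero_le_one
      (hw.integrable_rpow_mul_bracket hN hK)).const_mul (N : ℝ))
    ((cutoff_term.sqrt.const_add (r * √(∫ x, ‖fderiv ℝ w x‖ ^ 2))).mul_const
      √(N ^ 2 * groundMass N))
    ((eventually_ne_atTop 0).mono bound)
  rw [hw.integral_rpow_mul_bracket hN hK, Real.sqrt_zero, add_zero,
    Real.sqrt_mul (sq_nonneg _), Real.sqrt_sq hN0.le] at limit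
  have sqrt_le : √(groundMass N) ≤ √(∫ x, ‖fderiv ℝ w x‖ ^ 2) := by
    refine le_of_mul_le_mul_left ?_ (by positivity : 0 < N * r * √(groundMass N))
    calc N * r * √(groundMass N) * √(groundMass N) = N * (r * groundMass N) := by
          rw [mul_assoc, Real.mul_self_sqrt hA.le, mul_assoc]
      _ ≤ _ := limit
      _ = _ := by ring
  exact (Real.sqrt_le_sqrt_iff (integral_nonneg fun x => sq_nonneg _)).1 sqrt_le

lemma integral_rpow_le (hw : AdmissibleProfile N w) :
    ∫ x, w x ^ criticalExponent N ≤
      groundMass N * ((∫ x, ‖fderiv ℝ w x‖ ^ 2) / groundMass N) ^ (criticalExponent N / 2) := by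
  have hA := groundMass_pos hN
  have ha := hw.integral_rpow_pos hN
  have hq := criticalExponent_pos hN
  set t := (groundMass N / ∫ x, w x ^ criticalExponent N) ^ (criticalExponent N)⁻¹
  have ht : 0 < t := by positivity
  have mass : ∫ x, (t * w x) ^ criticalExponent N = groundMass N := by
    simp only [Real.mul_rpow ht.le (hw.pos _).le, integral_const_mul, t]
    rw [Real.rpow_inv_rpow (by positivity) hq.ne', div_mul_cancel₀ _ ha.ne']
  have normalized := (hw.const_mul ht).groundMass_le_integral_norm_fderiv_sq hN mass
  rw [integral_norm_fderiv_const_mul_sq (hw.contDiff.differentiable one_ne_zero),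
    ← Real.rpow_mul_natCast (by positivity), Nat.cast_ofNat, inv_mul_eq_div] at normalized
  exact le_mul_rpow_half_of_le_rpow_mul hA ha hq normalized

end AdmissibleProfile

lemma norm_fderiv_sqrt_sq_add_sq_sq_le {E : Type*} [NormedAddCommGroup E] [NormedSpace ℝ E]
    {u v : E → ℝ} {x : E} (hu : DifferentiableAt ℝ u x) (hv : DifferentiableAt ℝ v x)
    (hpos : 0 < u x ^ 2 + v x ^ 2) :
    ‖fderiv ℝ (fun y => √(u y ^ 2 + v y ^ 2)) x‖ ^ 2 ≤
      ‖fderiv ℝ u x‖ ^ 2 + ‖fderiv ℝ v x‖ ^ 2 := by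
  have hs : 0 < √(u x ^ 2 + v x ^ 2) := Real.sqrt_pos.2 hpos
  have deriv : √(u x ^ 2 + v x ^ 2) • fderiv ℝ (fun y => √(u y ^ 2 + v y ^ 2)) x =
      u x • fderiv ℝ u x + v x • fderiv ℝ v x := by
    have hsum : HasFDerivAt (fun y => u y ^ 2 + v y ^ 2) _ x :=
      (hu.hasFDerivAt.pow 2).add (hv.hasFDerivAt.pow 2)
    rw [(hsum.sqrt hpos.ne').fderiv, smul_smul, mul_one_div, div_mul_cancel_right₀ hs.ne',
      Nat.add_one_sub_one, pow_one, pow_one, smul_add]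
    module
  have norm_le : √(u x ^ 2 + v x ^ 2) * ‖fderiv ℝ (fun y => √(u y ^ 2 + v y ^ 2)) x‖ ≤
      |u x| * ‖fderiv ℝ u x‖ + |v x| * ‖fderiv ℝ v x‖ := by
    simpa only [← deriv, norm_smul, Real.norm_eq_abs, abs_of_pos hs] using
      norm_add_le (u x • fderiv ℝ u x) (v x • fderiv ℝ v x)
  refine le_of_mul_le_mul_left ?_ hpos
  calc (u x ^ 2 + v x ^ 2) * ‖fderiv ℝ (fun y => √(u y ^ 2 + v y ^ 2)) x‖ ^ 2
      = (√(u x ^ 2 + v x ^ 2) * ‖fderiv ℝ (fun y => √(u y ^ 2 + v y ^ 2)) x‖) ^ 2 := by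
        rw [mul_pow, Real.sq_sqrt hpos.le]
    _ ≤ (|u x| * ‖fderiv ℝ u x‖ + |v x| * ‖fderiv ℝ v x‖) ^ 2 := by gcongr
    _ ≤ (|u x| ^ 2 + |v x| ^ 2) * (‖fderiv ℝ u x‖ ^ 2 + ‖fderiv ℝ v x‖ ^ 2) := by
        linarith [sq_nonneg (|u x| * ‖fderiv ℝ v x‖ - |v x| * ‖fderiv ℝ u x‖)]
    _ = _ := by rw [sq_abs, sq_abs]

lemma norm_fderiv_mul_le {E : Type*} [NormedAddCommGroup E] [NormedSpace ℝ E]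
    {χ v : E → ℝ} {x : E} (hχ : DifferentiableAt ℝ χ x) (hv : DifferentiableAt ℝ v x)
    (h0 : 0 ≤ χ x) (h1 : χ x ≤ 1) :
    ‖fderiv ℝ (fun y => χ y * v y) x‖ ≤ ‖fderiv ℝ v x‖ + |v x| * ‖fderiv ℝ χ x‖ := by
  rw [fderiv_fun_mul hχ hv]
  refine (norm_add_le _ _).trans ?_
  rw [norm_smul, norm_smul, Real.norm_of_nonneg h0, Real.norm_eq_abs]
  gcongr
  exact mul_le_of_le_one_left (norm_nonneg _) h1

section Sobolev

variable {N : ℕ} {u w v φ : EuclideanSpace ℝ (Fin N) → ℝ}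

lemma AdmissibleProfile.sqrt_sq_add_sq (hw : AdmissibleProfile N w) (hu : ContDiff ℝ 1 u)
    (hu_le : ∃ C, ∀ x, |u x| ≤ C * W N x) (hu' : MemLp (fderiv ℝ u) 2) :
    AdmissibleProfile N fun x => √(u x ^ 2 + w x ^ 2) := by
  have hpos (x : EuclideanSpace ℝ (Fin N)) : 0 < u x ^ 2 + w x ^ 2 :=
    add_pos_of_nonneg_of_pos (sq_nonneg _) (pow_pos (hw.pos x) 2)
  have hdiff : ContDiff ℝ 1 fun x => √(u x ^ 2 + w x ^ 2) :=
    ((hu.pow 2).add (hw.contDiff.pow 2)).sqrt fun x => (hpos x).ne'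
  refine ⟨hdiff, fun x => Real.sqrt_pos.2 (hpos x), ?_, ?_⟩
  · obtain ⟨C, hC⟩ := hu_le
    obtain ⟨K, hK⟩ := hw.exists_le
    refine ⟨C + K, fun x => ?_⟩
    calc √(u x ^ 2 + w x ^ 2) ≤ √((|u x| + w x) ^ 2) := by
          refine Real.sqrt_le_sqrt ?_
          rw [add_sq, sq_abs]
          linarith [mul_nonneg (abs_nonneg (u x)) (hw.pos x).le]
      _ = |u x| + w x := Real.sqrt_sq (add_nonneg (abs_nonneg _) (hw.pos x).le)
      _ ≤ (C + K) * W N x := (add_le_add (hC x) (hK x)).trans_eq (add_mul _ _ _).symm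
  · have hcont := (hdiff.continuous_fderiv one_ne_zero).aestronglyMeasurable (μ := volume)
    refine (memLp_two_iff_integrable_sq_norm hcont).2 <|
      (hu'.norm.integrable_sq.add hw.memLp_fderiv.norm.integrable_sq).mono'
        (hcont.norm.pow 2) (ae_of_all _ fun x => ?_)
    rw [Real.norm_of_nonneg (sq_nonneg _)]
    exact norm_fderiv_sqrt_sq_add_sq_sq_le (hu.differentiable one_ne_zero x)
      (hw.contDiff.differentiable one_ne_zero x) (hpos x)

lemma AdmissibleProfile.integral_norm_fderiv_sqrt_sq_add_sq_le (hw : AdmissibleProfile N w)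
    (hu : Differentiable ℝ u) (hu' : MemLp (fderiv ℝ u) 2) :
    ∫ x, ‖fderiv ℝ (fun y => √(u y ^ 2 + w y ^ 2)) x‖ ^ 2 ≤
      (∫ x, ‖fderiv ℝ u x‖ ^ 2) + ∫ x, ‖fderiv ℝ w x‖ ^ 2 := by
  have hui := hu'.norm.integrable_sq
  have hwi := hw.memLp_fderiv.norm.integrable_sq
  rw [← integral_add hui hwi]
  exact integral_mono_of_nonneg (ae_of_all _ fun x => sq_nonneg _) (hui.add hwi)
    (ae_of_all _ fun x => norm_fderiv_sqrt_sq_add_sq_sq_le (hu x)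
      (hw.contDiff.differentiable one_ne_zero x)
      (add_pos_of_nonneg_of_pos (sq_nonneg _) (pow_pos (hw.pos x) 2)))

lemma integral_norm_fderiv_cutoff_mul_sq_le (hv : ContDiff ℝ 1 v) (hv' : MemLp (fderiv ℝ v) 2)
    {R : ℝ} (hR : R ≠ 0) :
    ∫ x, ‖fderiv ℝ (fun y => cutoff R y * v y) x‖ ^ 2 ≤
      (√(∫ x, ‖fderiv ℝ v x‖ ^ 2) + √(∫ x, (v x * ‖fderiv ℝ (cutoff R) x‖) ^ 2)) ^ 2 := by
  have hcut := memLp_mul_fderiv_cutoff (μ := volume) hv.continuous.abs hR 2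
  have minkowski := integral_add_sq_le hv'.norm hcut
  simp only [mul_pow, sq_abs] at minkowski ⊢
  refine le_trans (integral_mono_of_nonneg (ae_of_all _ fun x => sq_nonneg _)
    (hv'.norm.add hcut).integrable_sq (ae_of_all _ fun x => ?_)) minkowski
  exact pow_le_pow_left₀ (norm_nonneg _)
    (norm_fderiv_mul_le ((contDiff_cutoff R).differentiable one_ne_zero x)
      (hv.differentiable one_ne_zero x) (cutoff_nonneg R x) (cutoff_le_one R x)) 2

variable (hN : 2 < N)
include hN

lemma admissibleProfile_W : AdmissibleProfile N (W N) where
  contDiff := contDiff_W hN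
  pos := W_pos hN
  exists_le := ⟨1, fun _ => (one_mul _).ge⟩
  memLp_fderiv := memLp_fderiv_W hN

lemma exists_abs_le_mul_W (hφ : Continuous φ) (hs : HasCompactSupport φ) :
    ∃ C, ∀ x, |φ x| ≤ C * W N x := by
  have hcont : Continuous fun x => φ x * (W N x)⁻¹ :=
    hφ.mul ((contDiff_W hN).continuous.inv₀ fun x => (W_pos hN x).ne')
  obtain ⟨C, hC⟩ := hcont.bounded_above_of_compact_support hs.mul_right
  refine ⟨C, fun x => ?_⟩
  have bound := hC x
  rwa [← div_eq_mul_inv, Real.norm_eq_abs, abs_div, abs_of_pos (W_pos hN x),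
    div_le_iff₀ (W_pos hN x)] at bound

-- `√(φ² + (δW)²)` is positive, dominates `|φ|`, and costs only `δ² ∫ |∇W|²` more Dirichlet energy.
lemma integral_abs_rpow_le_of_hasCompactSupport (hφ : ContDiff ℝ 1 φ)
    (hs : HasCompactSupport φ) :
    ∫ x, |φ x| ^ criticalExponent N ≤
      groundMass N * ((∫ x, ‖fderiv ℝ φ x‖ ^ 2) / groundMass N) ^ (criticalExponent N / 2) := by
  have hA := groundMass_pos hN
  have hq := criticalExponent_pos hN
  have hφ' : MemLp (fderiv ℝ φ) 2 :=
    (hφ.continuous_fderiv one_ne_zero).memLp_of_hasCompactSupport (hs.fderiv ℝ)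
  have perturbed (δ : ℝ) (hδ : 0 < δ) : ∫ x, |φ x| ^ criticalExponent N ≤
      groundMass N * (((∫ x, ‖fderiv ℝ φ x‖ ^ 2) + δ ^ 2 * groundMass N) / groundMass N) ^
        (criticalExponent N / 2) := by
    have hδW := (admissibleProfile_W hN).const_mul hδ
    have hw := hδW.sqrt_sq_add_sq hφ (exists_abs_le_mul_W hN hφ.continuous hs) hφ'
    have energy_le := hδW.integral_norm_fderiv_sqrt_sq_add_sq_le
      (hφ.differentiable one_ne_zero) hφ'
    rw [integral_norm_fderiv_const_mul_sq ((contDiff_W hN).differentiable one_ne_zero),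
      integral_norm_fderiv_W_sq hN] at energy_le
    calc ∫ x, |φ x| ^ criticalExponent N
        ≤ ∫ x, √(φ x ^ 2 + (δ * W N x) ^ 2) ^ criticalExponent N :=
          integral_mono_of_nonneg (ae_of_all _ fun x => Real.rpow_nonneg (abs_nonneg _) _)
            (hw.transportDensity hN).integrable (ae_of_all _ fun x =>
              Real.rpow_le_rpow (abs_nonneg _)
                (Real.abs_le_sqrt (le_add_of_nonneg_right (sq_nonneg _))) hq.le)
      _ ≤ _ := hw.integral_rpow_le hN
      _ ≤ _ := by gcongr
  have limit : Continuous fun δ : ℝ => groundMass N *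
      (((∫ x, ‖fderiv ℝ φ x‖ ^ 2) + δ ^ 2 * groundMass N) / groundMass N) ^
        (criticalExponent N / 2) :=
    continuous_const.mul (Continuous.rpow_const (by fun_prop) fun δ => Or.inr (half_pos hq).le)
  have at_zero := ge_of_tendsto (limit.continuousWithinAt (s := Ioi 0) (x := 0)).tendsto
    (eventually_mem_nhdsWithin.mono perturbed)
  simpa only [zero_pow two_ne_zero, zero_mul, add_zero] using at_zero

theorem integral_abs_rpow_criticalExponent_le (hv : ContDiff ℝ 1 v)
    (hv' : MemLp (fderiv ℝ v) 2) (hvq : MemLp v (ENNReal.ofReal (criticalExponent N))) :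
    ∫ x, |v x| ^ criticalExponent N ≤
      groundMass N * ((∫ x, ‖fderiv ℝ v x‖ ^ 2) / groundMass N) ^ (criticalExponent N / 2) := by
  have hA := groundMass_pos hN
  have hq := criticalExponent_pos hN
  have hvi : Integrable fun x => |v x| ^ criticalExponent N := by
    simpa only [ENNReal.toReal_ofReal hq.le, Real.norm_eq_abs] using
      hvq.integrable_norm_rpow (ENNReal.ofReal_pos.2 hq).ne' ENNReal.ofReal_ne_top
  have bound (R : ℝ) (hR : R ≠ 0) :
      ∫ x, cutoff R x ^ criticalExponent N * |v x| ^ criticalExponent N ≤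
        groundMass N * ((√(∫ x, ‖fderiv ℝ v x‖ ^ 2) +
          √(∫ x, (v x * ‖fderiv ℝ (cutoff R) x‖) ^ 2)) ^ 2 / groundMass N) ^
            (criticalExponent N / 2) := by
    have compact := integral_abs_rpow_le_of_hasCompactSupport hN
      ((contDiff_cutoff R).mul hv) (hasCompactSupport_cutoff hR).mul_right
    simp only [abs_mul, abs_of_nonneg (cutoff_nonneg R _),
      Real.mul_rpow (cutoff_nonneg R _) (abs_nonneg _)] at compact
    refine compact.trans ?_
    gcongr
    exact integral_norm_fderiv_cutoff_mul_sq_le hv hv' hR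
  have cutoff_term := tendsto_integral_mul_fderiv_cutoff_sq (μ := volume) (w := v)
    (by rwa [finrank_euclideanSpace_fin])
    (by simpa only [finrank_euclideanSpace_fin] using! hvq)
  have limit := le_of_tendsto_of_tendsto (tendsto_integral_cutoff_rpow_mul hq.le hvi)
    ((((cutoff_term.sqrt.const_add √(∫ x, ‖fderiv ℝ v x‖ ^ 2)).pow 2).div_const
      (groundMass N)).rpow_const (Or.inr (half_pos hq).le) |>.const_mul (groundMass N))
    ((eventually_ne_atTop 0).mono bound)
  rwa [Real.sqrt_zero, add_zero, Real.sq_sqrt (integral_nonneg fun x => sq_nonneg _)] at limit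

end Sobolev

/-! ### The energy bound -/

lemma rpow_le_one_sub_min_mul {z θ : ℝ} (hz : 0 < z) (hz1 : z ≤ 1) (hθ : 0 ≤ θ) :
    z ^ θ ≤ 1 - min 1 θ * (1 - z) := by
  have bernoulli := rpow_one_add_le_one_add_mul_self (s := z - 1) (by linarith)
    (le_min zero_le_one hθ) (min_le_left 1 θ)
  rw [add_sub_cancel] at bernoulli
  linarith [Real.rpow_le_rpow_of_exponent_ge hz hz1 (min_le_right 1 θ)]

lemma half_le_mul_one_sub_div {y Y ε : ℝ} (hε : 0 < ε) (hy : ε ≤ y) (hyY : y ≤ Y - ε) :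
    ε / 2 ≤ y * (1 - y / Y) := by
  have hY : 0 < Y := by linarith
  rw [← div_self hY.ne', ← sub_div, mul_div_assoc', le_div_iff₀ hY]
  rcases le_total y (Y / 2) with small | large
  · linarith [mul_le_mul hy (by linarith : Y / 2 ≤ Y - y) (by linarith) (by linarith)]
  · linarith [mul_le_mul large (by linarith : ε ≤ Y - y) hε.le (by linarith)]

lemma mul_div_rpow_one_add {A y k θ : ℝ} (hA : 0 < A) (hy : 0 < y) (hk : 0 < k) :
    A * (y / A) ^ (1 + θ) = k ^ θ * y * (y / (k * A)) ^ θ := by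
  have hyA : y / A = k * (y / (k * A)) := by field_simp
  rw [Real.rpow_add (by positivity), Real.rpow_one, ← mul_assoc, mul_div_cancel₀ y hA.ne',
    hyA, Real.mul_rpow hk.le (by positivity)]
  ring

lemma mul_one_sub_rpow_le_energy {N : ℕ} (hN : 2 < N) {v : EuclideanSpace ℝ (Fin N) → ℝ}
    (hv : ContDiff ℝ 1 v) (hv' : Integrable fun x => ‖gradient v x‖ ^ 2)
    (hvq : Integrable fun x => |v x| ^ criticalExponent N)
    (hpos : 0 < ∫ x, ‖gradient v x‖ ^ 2) :
    (∫ x, ‖gradient v x‖ ^ 2) / 2 *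
      (1 - ((∫ x, ‖gradient v x‖ ^ 2) /
        (((N : ℝ) / (N - 2)) ^ (((N : ℝ) - 2) / 2) * groundMass N)) ^ (2 / ((N : ℝ) - 2))) ≤
      energy N v 0 := by
  have hN2 := cast_sub_two_pos hN
  have hq := criticalExponent_pos hN
  have hk : (((N : ℝ) / (N - 2)) ^ (((N : ℝ) - 2) / 2)) ^ (2 / ((N : ℝ) - 2)) =
      N / (N - 2) := by
    rw [← inv_div ((N : ℝ) - 2) 2, Real.rpow_rpow_inv (by positivity) (by positivity)]
  have hexp : criticalExponent N / 2 = 1 + 2 / ((N : ℝ) - 2) := by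
    rw [criticalExponent]
    field_simp
    ring
  simp only [norm_gradient] at hv' hpos
  have sobolev := integral_abs_rpow_criticalExponent_le hN hv
    ((memLp_two_iff_integrable_sq_norm
      (hv.continuous_fderiv one_ne_zero).aestronglyMeasurable).2 hv')
    ((integrable_norm_rpow_iff hv.continuous.aestronglyMeasurable
      (ENNReal.ofReal_pos.2 hq).ne' ENNReal.ofReal_ne_top).1
        (by simpa only [ENNReal.toReal_ofReal hq.le, Real.norm_eq_abs] using hvq))
  rw [hexp, mul_div_rpow_one_add (groundMass_pos hN) hpos (k := ((N : ℝ) / (N - 2)) ^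
    (((N : ℝ) - 2) / 2)) (by positivity), hk, criticalExponent] at sobolev
  simp only [energy, norm_gradient, Pi.zero_apply, zero_pow two_ne_zero, integral_zero, mul_zero,
    zero_add]
  have potential := mul_le_mul_of_nonneg_left sobolev
    (by positivity : 0 ≤ ((N : ℝ) - 2) / (2 * N))
  have cancel (a : ℝ) : ((N : ℝ) - 2) / (2 * N) * (N / (N - 2) * a) = a / 2 := by field_simp
  rw [mul_assoc (_ / _), cancel] at potential
  linarith

theorem stmt1_general (N : ℕ) (hN : 2 < N) :
    ∃ c > (0 : ℝ), ∀ ε : ℝ, 0 < ε →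
      ∀ v : EuclideanSpace ℝ (Fin N) → ℝ,
        ContDiff ℝ 1 v →
        Integrable (fun x => ‖gradient v x‖ ^ 2) →
        Integrable (fun x => |v x| ^ (2 * (N : ℝ) / ((N : ℝ) - 2))) →
        ε ≤ (∫ x, ‖gradient v x‖ ^ 2) →
        (∫ x, ‖gradient v x‖ ^ 2)
          ≤ ((N : ℝ) / ((N : ℝ) - 2)) ^ (((N : ℝ) - 2) / 2)
              * (∫ x, ‖gradient (W N) x‖ ^ 2) - ε →
        c * ε ≤ energy N v 0 := by
  have hθ : 0 < 2 / ((N : ℝ) - 2) := div_pos two_pos (cast_sub_two_pos hN)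
  refine ⟨min 1 (2 / ((N : ℝ) - 2)) / 4, by positivity, fun ε hε v hv hv' hvq hlow hhigh => ?_⟩
  have henergy := mul_one_sub_rpow_le_energy hN hv hv' hvq (hε.trans_le hlow)
  simp only [norm_gradient (W N), integral_norm_fderiv_W_sq hN] at hhigh
  set y := ∫ x, ‖gradient v x‖ ^ 2
  set Y := ((N : ℝ) / ((N : ℝ) - 2)) ^ (((N : ℝ) - 2) / 2) * groundMass N
  set m := min 1 (2 / ((N : ℝ) - 2))
  have hy : 0 < y := hε.trans_le hlow
  have hY : 0 < Y := by linarith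
  have hz : (y / Y) ^ (2 / ((N : ℝ) - 2)) ≤ 1 - m * (1 - y / Y) :=
    rpow_le_one_sub_min_mul (div_pos hy hY) ((div_le_one hY).2 (by linarith)) hθ.le
  calc m / 4 * ε = m / 2 * (ε / 2) := by ring
    _ ≤ m / 2 * (y * (1 - y / Y)) := by
        gcongr
        exact half_le_mul_one_sub_div hε hlow hhigh
    _ = y / 2 * (1 - (1 - m * (1 - y / Y))) := by ring
    _ ≤ y / 2 * (1 - (y / Y) ^ (2 / ((N : ℝ) - 2))) := by gcongr
    _ ≤ energy N v 0 := henergy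

/-- Claim 2.2, second part: there are constants `c > 0` and `ε₀ > 0` such that any `v`
with `ε ≤ ‖∇v‖² ≤ (N/(N-2))^((N-2)/2) ‖∇W‖² - ε` (for `0 < ε ≤ ε₀`) has `E(v,0) ≥ cε`. -/
theorem stmt1 (N : ℕ) (hN : N = 3 ∨ N = 4 ∨ N = 5) :
    ∃ c > (0 : ℝ), ∃ ε₀ > (0 : ℝ), ∀ ε : ℝ, 0 < ε → ε ≤ ε₀ →
      ∀ v : EuclideanSpace ℝ (Fin N) → ℝ,
        ContDiff ℝ 1 v →
        Integrable (fun x => ‖gradient v x‖ ^ 2) →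
        Integrable (fun x => |v x| ^ (2 * (N : ℝ) / ((N : ℝ) - 2))) →
        ε ≤ (∫ x, ‖gradient v x‖ ^ 2) →
        (∫ x, ‖gradient v x‖ ^ 2)
          ≤ ((N : ℝ) / ((N : ℝ) - 2)) ^ (((N : ℝ) - 2) / 2)
              * (∫ x, ‖gradient (W N) x‖ ^ 2) - ε →
        c * ε ≤ energy N v 0 := by
  obtain ⟨c, hc, h⟩ := stmt1_general N (by omega)
  exact ⟨c, hc, 1, one_pos, fun ε hε _ => h ε hε⟩

end
end

section
/- Let N ∈ {3,4,5} and ℓ ∈ (−1,1). Then for every t ∈ ℝ, ∫_{ℝ^N}|∇_x W_ℓ(t,x)|² dx + ((N−2)/2)·∫_{ℝ^N}(∂_t W_ℓ(t,x))² dx ≥ (1 + ℓ⁴/8)·∫_{ℝ^N}|∇W|² dx. -/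
/-!
`W_ℓ(t, ·)` is `W` composed with the dilation of factor `γ = (1 - ℓ²)^(-1/2)` along the first axis
and a translation. Hence, with `K = ∫ |∇W|²`, a linear change of variables gives
`∫ |∇W_ℓ|² = √(1 - ℓ²) K + ℓ² / √(1 - ℓ²) ∫ (∂₁W)²` and
`∫ (∂ₜW_ℓ)² = ℓ² / √(1 - ℓ²) ∫ (∂₁W)²`. Since `W` is radial, `∫ (∂₁W)² = K / N`, so the left-hand
side equals exactly `(1 - ℓ²/2) / √(1 - ℓ²) · K`, and the claim is an inequality in `ℓ` alone.
-/

open MeasureTheory Metric Filter Set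

noncomputable section

open Module
open scoped RealInnerProductSpace

section Gradient

variable {E F : Type*} [NormedAddCommGroup E] [InnerProductSpace ℝ E] [CompleteSpace E]
  [NormedAddCommGroup F] [InnerProductSpace ℝ F] [CompleteSpace F]

lemma hasGradientAt_comp {f : F → ℝ} {g : F} {φ : E → F} {A : E →L[ℝ] F} {x : E}
    (hf : HasGradientAt f g (φ x)) (hφ : HasFDerivAt φ A x) :
    HasGradientAt (fun y => f (φ y)) (A.adjoint g) x := by
  rw [hasGradientAt_iff_hasFDerivAt] at hf ⊢
  refine (hf.comp x hφ).congr_fderiv ?_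
  ext v
  simp [ContinuousLinearMap.adjoint_inner_left]

lemma hasDerivAt_comp_of_hasGradientAt {f : E → ℝ} {g : E} {c : ℝ → E} {c' : E} {t : ℝ}
    (hf : HasGradientAt f g (c t)) (hc : HasDerivAt c c' t) :
    HasDerivAt (fun s => f (c s)) ⟪g, c'⟫ t :=
  hf.hasFDerivAt.comp_hasDerivAt t hc

lemma measurable_inner_gradient [MeasurableSpace E] [BorelSpace E] (f : E → ℝ) (e : E) :
    Measurable fun x => ⟪e, gradient f x⟫ := by
  have h (x : E) : ⟪e, gradient f x⟫ = fderiv ℝ f x e := by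
    rw [real_inner_comm, inner_gradient_left]
  simpa only [h] using measurable_fderiv_apply_const ℝ f e

lemma integrable_sq_inner_gradient [MeasurableSpace E] [BorelSpace E] {μ : Measure E} {f : E → ℝ}
    (hf : Integrable (fun x => ‖gradient f x‖ ^ 2) μ) (e : E) :
    Integrable (fun x => ⟪e, gradient f x⟫ ^ 2) μ := by
  refine (hf.const_mul (‖e‖ ^ 2)).mono'
    ((measurable_inner_gradient f e).pow_const 2).aestronglyMeasurable (ae_of_all _ fun x => ?_)
  rw [Real.norm_of_nonneg (sq_nonneg _), ← mul_pow, ← sq_abs]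
  gcongr
  exact abs_real_inner_le_norm _ _

end Gradient

section Radial

variable {E : Type*} [NormedAddCommGroup E] [InnerProductSpace ℝ E]

/-- A function is radial if its value depends only on the norm of the argument. Radial symmetry is
what makes all directional derivatives have the same `L²` norm. -/
def IsRadial (f : E → ℝ) : Prop :=
  ∀ ⦃x y⦄, ‖x‖ = ‖y‖ → f x = f y

lemma IsRadial.gradient_linearIsometryEquiv [CompleteSpace E] {f : E → ℝ} (hf : IsRadial f)
    (hd : Differentiable ℝ f) (R : E ≃ₗᵢ[ℝ] E) (x : E) :
    gradient f (R x) = R (gradient f x) := by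
  have h := hasGradientAt_comp (hd (R x)).hasGradientAt R.toContinuousLinearEquiv.hasFDerivAt
  have hfR : (fun y => f (R y)) = f := funext fun y => hf (R.norm_map y)
  change HasGradientAt (fun y => f (R y)) _ x at h
  rw [hfR] at h
  simp [h.gradient]

variable [FiniteDimensional ℝ E] [MeasurableSpace E] [BorelSpace E]

lemma IsRadial.integral_sq_inner_gradient_eq {f : E → ℝ} (hf : IsRadial f)
    (hd : Differentiable ℝ f) {e e' : E} (he : ‖e‖ = ‖e'‖) :
    ∫ x, ⟪e, gradient f x⟫ ^ 2 = ∫ x, ⟪e', gradient f x⟫ ^ 2 := by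
  let R := (ℝ ∙ (e - e'))ᗮ.reflection
  have hR : R e = e' := Submodule.reflection_sub he
  rw [← R.measurePreserving.integral_comp R.toHomeomorph.measurableEmbedding
    (fun x => ⟪e', gradient f x⟫ ^ 2)]
  simp only [hf.gradient_linearIsometryEquiv hd, ← hR, R.inner_map_map]

lemma IsRadial.integral_norm_sq_gradient {f : E → ℝ} (hf : IsRadial f) (hd : Differentiable ℝ f)
    (hint : Integrable fun x => ‖gradient f x‖ ^ 2) {e : E} (he : ‖e‖ = 1) :
    ∫ x, ‖gradient f x‖ ^ 2 = finrank ℝ E * ∫ x, ⟪e, gradient f x⟫ ^ 2 := by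
  let b := stdOrthonormalBasis ℝ E
  calc ∫ x, ‖gradient f x‖ ^ 2
      = ∑ i, ∫ x, ⟪b i, gradient f x⟫ ^ 2 := by
        simp only [← b.sum_sq_inner_right]
        exact integral_finsetSum _ fun i _ => integrable_sq_inner_gradient hint (b i)
    _ = ∑ _i : Fin (finrank ℝ E), ∫ x, ⟪e, gradient f x⟫ ^ 2 :=
        Finset.sum_congr rfl fun i _ =>
          hf.integral_sq_inner_gradient_eq hd ((b.norm_eq_one i).trans he.symm)
    _ = finrank ℝ E * ∫ x, ⟪e, gradient f x⟫ ^ 2 := by simp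

end Radial

section AxisDilation

variable {E : Type*} [NormedAddCommGroup E] [InnerProductSpace ℝ E]

/-- The dilation by the factor `γ` along the axis of the unit vector `e`, fixing the orthogonal
complement of `e`. It is the spatial part of a Lorentz transformation. -/
def axisDilation (e : E) (γ : ℝ) : E →L[ℝ] E :=
  ContinuousLinearMap.id ℝ E + (innerSL ℝ e).smulRight ((γ - 1) • e)

lemma axisDilation_apply (e : E) (γ : ℝ) (x : E) :
    axisDilation e γ x = x + ⟪e, x⟫ • (γ - 1) • e := rfl

lemma axisDilation_self {e : E} (he : ‖e‖ = 1) (γ : ℝ) : axisDilation e γ e = γ • e := by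
  rw [axisDilation_apply, real_inner_self_eq_norm_sq, he]
  module

lemma adjoint_axisDilation [CompleteSpace E] (e : E) (γ : ℝ) :
    (axisDilation e γ).adjoint = axisDilation e γ := by
  refine ((ContinuousLinearMap.eq_adjoint_iff _ _).2 fun x y => ?_).symm
  simp only [axisDilation_apply, inner_add_left, inner_add_right, real_inner_smul_left,
    real_inner_smul_right, real_inner_comm x e]
  ring

lemma norm_sq_axisDilation {e : E} (he : ‖e‖ = 1) (γ : ℝ) (x : E) :
    ‖axisDilation e γ x‖ ^ 2 = ‖x‖ ^ 2 + (γ ^ 2 - 1) * ⟪e, x⟫ ^ 2 := by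
  rw [axisDilation_apply, norm_add_sq_real, norm_smul, norm_smul, he, real_inner_smul_right,
    real_inner_smul_right, real_inner_comm, Real.norm_eq_abs, Real.norm_eq_abs, mul_pow, mul_one,
    sq_abs, sq_abs]
  ring

lemma det_axisDilation [FiniteDimensional ℝ E] {e : E} (he : ‖e‖ = 1) (γ : ℝ) :
    LinearMap.det (axisDilation e γ : E →ₗ[ℝ] E) = γ := by
  have h := LinearMap.transvection.det (innerₛₗ ℝ e) ((γ - 1) • e)
  rw [innerₛₗ_apply_apply, real_inner_smul_right, real_inner_self_eq_norm_sq, he] at h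
  calc _ = 1 + (γ - 1) * 1 ^ 2 := h
    _ = γ := by ring

end AxisDilation

lemma integral_comp_linearMap_sub {E F : Type*} [NormedAddCommGroup E] [NormedSpace ℝ E]
    [FiniteDimensional ℝ E] [MeasurableSpace E] [BorelSpace E] [NormedAddCommGroup F]
    [NormedSpace ℝ F] (μ : Measure E) [μ.IsAddHaarMeasure] {L : E →ₗ[ℝ] E}
    (hL : LinearMap.det L ≠ 0) (a : E) (g : E → F) :
    ∫ x, g (L (x - a)) ∂μ = |(LinearMap.det L)⁻¹| • ∫ x, g x ∂μ := by
  have hemb : MeasurableEmbedding L :=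
    (L.equivOfDetNeZero hL).toContinuousLinearEquiv.toHomeomorph.measurableEmbedding
  rw [integral_sub_right_eq_self (fun x => g (L x)) a, ← hemb.integral_map,
    Measure.map_linearMap_addHaar_eq_smul_addHaar μ hL, integral_smul_measure,
    ENNReal.toReal_ofReal (abs_nonneg _)]

section LorentzBoost

variable {E : Type*} [NormedAddCommGroup E] [InnerProductSpace ℝ E]

/-- The Lorentz transform with velocity `ℓ` along the unit vector `e` of a time-independent
function `f`: a wave travelling at speed `ℓ`, contracted in the direction of `e`. -/
def lorentzBoost (f : E → ℝ) (e : E) (ℓ t : ℝ) (x : E) : ℝ :=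
  f (axisDilation e (√(1 - ℓ ^ 2))⁻¹ (x - (t * ℓ) • e))

lemma norm_sq_gradient_lorentzBoost [CompleteSpace E] {f : E → ℝ} (hd : Differentiable ℝ f)
    {e : E} (he : ‖e‖ = 1) {ℓ : ℝ} (hℓ : ℓ ^ 2 < 1) (t : ℝ) (x : E) :
    ‖gradient (lorentzBoost f e ℓ t) x‖ ^ 2 =
      lorentzBoost (fun y => ‖gradient f y‖ ^ 2 + ℓ ^ 2 / (1 - ℓ ^ 2) * ⟪e, gradient f y⟫ ^ 2)
        e ℓ t x := by
  have hγ : (√(1 - ℓ ^ 2))⁻¹ ^ 2 - 1 = ℓ ^ 2 / (1 - ℓ ^ 2) := by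
    have hpos : 0 < 1 - ℓ ^ 2 := sub_pos.2 hℓ
    rw [inv_pow, Real.sq_sqrt hpos.le]
    field_simp
    ring
  let S := axisDilation e (√(1 - ℓ ^ 2))⁻¹
  have hφ : HasFDerivAt (fun y => S (y - (t * ℓ) • e)) S x :=
    S.hasFDerivAt.comp x ((hasFDerivAt_id x).sub_const _)
  have hgrad : gradient (lorentzBoost f e ℓ t) x = S (gradient f (S (x - (t * ℓ) • e))) := by
    have h := (hasGradientAt_comp (hd _).hasGradientAt hφ).gradient
    rwa [adjoint_axisDilation] at h
  rw [hgrad, norm_sq_axisDilation he, hγ]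
  rfl

lemma deriv_lorentzBoost [CompleteSpace E] {f : E → ℝ} (hd : Differentiable ℝ f)
    {e : E} (he : ‖e‖ = 1) (ℓ t : ℝ) (x : E) :
    deriv (fun s => lorentzBoost f e ℓ s x) t =
      lorentzBoost (fun y => -(ℓ / √(1 - ℓ ^ 2)) * ⟪e, gradient f y⟫) e ℓ t x := by
  let S := axisDilation e (√(1 - ℓ ^ 2))⁻¹
  have hc : HasDerivAt (fun s : ℝ => S (x - (s * ℓ) • e)) (S (-(ℓ • e))) t := by
    have h := (((hasDerivAt_id t).mul_const ℓ).smul_const e).const_sub x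
    rw [one_mul] at h
    exact S.hasFDerivAt.comp_hasDerivAt t h
  have hSe : S (-(ℓ • e)) = (-(ℓ / √(1 - ℓ ^ 2))) • e := by
    rw [map_neg, map_smul, axisDilation_self he, smul_smul, neg_smul, div_eq_mul_inv]
  rw [hSe] at hc
  have h := (hasDerivAt_comp_of_hasGradientAt (hd _).hasGradientAt hc).deriv
  rwa [real_inner_smul_right, real_inner_comm] at h

variable [FiniteDimensional ℝ E] [MeasurableSpace E] [BorelSpace E]

lemma integral_lorentzBoost (g : E → ℝ) {e : E} (he : ‖e‖ = 1) {ℓ : ℝ} (hℓ : ℓ ^ 2 < 1) (t : ℝ) :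
    ∫ x, lorentzBoost g e ℓ t x = √(1 - ℓ ^ 2) * ∫ x, g x := by
  have hs : 0 < √(1 - ℓ ^ 2) := Real.sqrt_pos.2 (sub_pos.2 hℓ)
  have hdet := det_axisDilation he (√(1 - ℓ ^ 2))⁻¹
  have h := integral_comp_linearMap_sub volume (hdet.trans_ne (inv_ne_zero hs.ne')) ((t * ℓ) • e) g
  rwa [hdet, inv_inv, abs_of_pos hs, smul_eq_mul] at h

lemma integral_norm_sq_gradient_lorentzBoost {f : E → ℝ} (hd : Differentiable ℝ f)
    (hint : Integrable fun x => ‖gradient f x‖ ^ 2) {e : E} (he : ‖e‖ = 1) {ℓ : ℝ}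
    (hℓ : ℓ ^ 2 < 1) (t : ℝ) :
    ∫ x, ‖gradient (lorentzBoost f e ℓ t) x‖ ^ 2 =
      √(1 - ℓ ^ 2) * ((∫ x, ‖gradient f x‖ ^ 2) +
        ℓ ^ 2 / (1 - ℓ ^ 2) * ∫ x, ⟪e, gradient f x⟫ ^ 2) := by
  simp only [norm_sq_gradient_lorentzBoost hd he hℓ]
  rw [integral_lorentzBoost _ he hℓ,
    integral_add hint ((integrable_sq_inner_gradient hint e).const_mul _), integral_const_mul]

lemma integral_sq_deriv_lorentzBoost {f : E → ℝ} (hd : Differentiable ℝ f)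
    {e : E} (he : ‖e‖ = 1) {ℓ : ℝ} (hℓ : ℓ ^ 2 < 1) (t : ℝ) :
    ∫ x, deriv (fun s => lorentzBoost f e ℓ s x) t ^ 2 =
      √(1 - ℓ ^ 2) * (ℓ ^ 2 / (1 - ℓ ^ 2) * ∫ x, ⟪e, gradient f x⟫ ^ 2) := by
  have hsq : (ℓ / √(1 - ℓ ^ 2)) ^ 2 = ℓ ^ 2 / (1 - ℓ ^ 2) := by
    rw [div_pow, Real.sq_sqrt (sub_pos.2 hℓ).le]
  have h := integral_lorentzBoost
    (fun y => (-(ℓ / √(1 - ℓ ^ 2)) * ⟪e, gradient f y⟫) ^ 2) he hℓ t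
  simp only [mul_pow, neg_sq, hsq, integral_const_mul] at h
  simp only [deriv_lorentzBoost hd he]
  rw [← h]
  simp only [lorentzBoost, mul_pow, neg_sq, hsq]

lemma IsRadial.integral_lorentzBoost_energy {f : E → ℝ} (hf : IsRadial f)
    (hd : Differentiable ℝ f) (hint : Integrable fun x => ‖gradient f x‖ ^ 2) {e : E}
    (he : ‖e‖ = 1) {ℓ : ℝ} (hℓ : ℓ ^ 2 < 1) (t : ℝ) :
    (∫ x, ‖gradient (lorentzBoost f e ℓ t) x‖ ^ 2) +
        ((finrank ℝ E : ℝ) - 2) / 2 * ∫ x, deriv (fun s => lorentzBoost f e ℓ s x) t ^ 2 =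
      (1 - ℓ ^ 2 / 2) / √(1 - ℓ ^ 2) * ∫ x, ‖gradient f x‖ ^ 2 := by
  have hpos : 0 < 1 - ℓ ^ 2 := sub_pos.2 hℓ
  have hs : √(1 - ℓ ^ 2) ≠ 0 := (Real.sqrt_pos.2 hpos).ne'
  rw [integral_norm_sq_gradient_lorentzBoost hd hint he hℓ,
    integral_sq_deriv_lorentzBoost hd he hℓ, hf.integral_norm_sq_gradient hd hint he]
  field_simp
  rw [Real.sq_sqrt hpos.le]
  ring

end LorentzBoost

lemma one_add_pow_four_div_eight_le {ℓ : ℝ} (hℓ : ℓ ^ 2 < 1) :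
    1 + ℓ ^ 4 / 8 ≤ (1 - ℓ ^ 2 / 2) / √(1 - ℓ ^ 2) := by
  have hpos : 0 < 1 - ℓ ^ 2 := sub_pos.2 hℓ
  rw [le_div_iff₀ (Real.sqrt_pos.2 hpos)]
  refine (sq_le_sq₀ (by positivity) (by linarith)).1 ?_
  have hgap : 0 ≤ ℓ ^ 6 * (1 / 4 - ℓ ^ 2 * (1 - ℓ ^ 2) / 64) := by
    have : ℓ ^ 2 * (1 - ℓ ^ 2) ≤ 1 := by nlinarith [sq_nonneg ℓ]
    exact mul_nonneg (by positivity) (by linarith)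
  calc ((1 + ℓ ^ 4 / 8) * √(1 - ℓ ^ 2)) ^ 2
      = (1 + ℓ ^ 4 / 8) ^ 2 * (1 - ℓ ^ 2) := by rw [mul_pow, Real.sq_sqrt hpos.le]
    _ = (1 - ℓ ^ 2 / 2) ^ 2 - ℓ ^ 6 * (1 / 4 - ℓ ^ 2 * (1 - ℓ ^ 2) / 64) := by ring
    _ ≤ (1 - ℓ ^ 2 / 2) ^ 2 := sub_le_self _ hgap

lemma integrable_one_add_norm_sq_div_rpow_neg {E : Type*} [NormedAddCommGroup E]
    [NormedSpace ℝ E] [FiniteDimensional ℝ E] [MeasurableSpace E] [BorelSpace E] (μ : Measure E)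
    [μ.IsAddHaarMeasure] {c r : ℝ} (hc : 0 < c) (hr : (finrank ℝ E : ℝ) < 2 * r) :
    Integrable (fun x => (1 + ‖x‖ ^ 2 / c) ^ (-r)) μ := by
  have h := (integrable_rpow_neg_one_add_norm_sq (μ := μ) hr).comp_smul
    (inv_ne_zero (Real.sqrt_pos.2 hc).ne')
  refine h.congr (ae_of_all _ fun x => ?_)
  simp only [norm_smul, mul_pow, norm_inv, inv_pow, Real.norm_eq_abs, sq_abs, Real.sq_sqrt hc.le]
  congr 1 <;> ring

section GroundState

variable {N : ℕ}

lemma isRadial_W : IsRadial (W N) := fun x y h => by simp only [W, h]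

lemma hasGradientAt_W (hN : 3 ≤ N) (x : EuclideanSpace ℝ (Fin N)) :
    HasGradientAt (W N)
      (-((1 + ‖x‖ ^ 2 / ((N : ℝ) * ((N : ℝ) - 2))) ^ (-(N : ℝ) / 2) / N) • x) x := by
  have hN' : (3 : ℝ) ≤ N := by exact_mod_cast hN
  have hN0 : (N : ℝ) ≠ 0 := by linarith
  have hN2 : 0 < (N : ℝ) - 2 := by linarith
  have hbase : 1 + ‖x‖ ^ 2 * ((N : ℝ) * ((N : ℝ) - 2))⁻¹ ≠ 0 := by positivity
  have h := (((hasStrictFDerivAt_norm_sq x).hasFDerivAt.mul_const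
    ((N : ℝ) * ((N : ℝ) - 2))⁻¹).const_add 1).rpow_const
    (p := -(((N : ℝ) - 2) / 2)) (Or.inl hbase)
  have hexp : -(((N : ℝ) - 2) / 2) - 1 = -(N : ℝ) / 2 := by ring
  rw [hexp] at h
  simp only [← div_eq_mul_inv] at h
  rw [hasGradientAt_iff_hasFDerivAt]
  refine h.congr_fderiv ?_
  ext v
  simp only [neg_mul, mul_inv_rev, smul_apply, coe_innerSL_apply, nsmul_eq_mul,
    Nat.cast_ofNat, smul_eq_mul, neg_smul, map_neg, map_smul, neg_apply,
    InnerProductSpace.toDual_apply_apply, neg_inj]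
  field_simp

lemma norm_sq_gradient_W (hN : 3 ≤ N) (x : EuclideanSpace ℝ (Fin N)) :
    ‖gradient (W N) x‖ ^ 2 = ((N : ℝ) - 2) / N *
      ((1 + ‖x‖ ^ 2 / ((N : ℝ) * ((N : ℝ) - 2))) ^ (-((N : ℝ) - 1)) -
        (1 + ‖x‖ ^ 2 / ((N : ℝ) * ((N : ℝ) - 2))) ^ (-(N : ℝ))) := by
  have hN' : (3 : ℝ) ≤ N := by exact_mod_cast hN
  have hN0 : (N : ℝ) ≠ 0 := by linarith
  have hN2 : 0 < (N : ℝ) - 2 := by linarith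
  set b := 1 + ‖x‖ ^ 2 / ((N : ℝ) * ((N : ℝ) - 2)) with hb
  have hb0 : 0 < b := by positivity
  have hx : ‖x‖ ^ 2 = (N : ℝ) * ((N : ℝ) - 2) * (b - 1) := by rw [hb]; field_simp; ring
  have hsq : (b ^ (-(N : ℝ) / 2)) ^ 2 = b ^ (-(N : ℝ)) := by
    rw [← Real.rpow_mul_natCast hb0.le]
    congr 1
    push_cast
    ring
  have hstep : b ^ (-((N : ℝ) - 1)) = b ^ (-(N : ℝ)) * b := by
    rw [← Real.rpow_add_one hb0.ne']
    congr 1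
    ring
  rw [(hasGradientAt_W hN x).gradient, norm_smul, mul_pow, Real.norm_eq_abs, sq_abs, neg_sq,
    div_pow, hsq, hx, hstep]
  field_simp

lemma integrable_norm_sq_gradient_W (hN : 3 ≤ N) :
    Integrable fun x => ‖gradient (W N) x‖ ^ 2 := by
  have hN' : (3 : ℝ) ≤ N := by exact_mod_cast hN
  have hc : 0 < (N : ℝ) * ((N : ℝ) - 2) := mul_pos (by linarith) (by linarith)
  have hint (r : ℝ) (hr : (N : ℝ) < 2 * r) :=
    integrable_one_add_norm_sq_div_rpow_neg (E := EuclideanSpace ℝ (Fin N)) volume hc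
      (r := r) (by rwa [finrank_euclideanSpace_fin])
  simp only [norm_sq_gradient_W hN]
  exact ((hint (N - 1) (by linarith)).sub (hint N (by linarith))).const_mul _

lemma Wl_eq_lorentzBoost (hN : 0 < N) {ℓ : ℝ} (hℓ : ℓ ^ 2 < 1) (t : ℝ) :
    Wl N ℓ t = lorentzBoost (W N) (EuclideanSpace.single ⟨0, hN⟩ 1) ℓ t := by
  funext x
  have hpos : 0 < 1 - ℓ ^ 2 := sub_pos.2 hℓ
  let e : EuclideanSpace ℝ (Fin N) := EuclideanSpace.single ⟨0, hN⟩ 1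
  have he : ‖e‖ = 1 := by simp [e]
  have hcoord : ⟪e, x⟫ = firstCoord x := by
    simp [e, firstCoord, hN, EuclideanSpace.inner_single_left]
  have hnorm : ‖axisDilation e (√(1 - ℓ ^ 2))⁻¹ (x - (t * ℓ) • e)‖ ^ 2 =
      (firstCoord x - t * ℓ) ^ 2 / (1 - ℓ ^ 2) + (‖x‖ ^ 2 - firstCoord x ^ 2) := by
    rw [norm_sq_axisDilation he, norm_sub_sq_real, inner_sub_right, real_inner_smul_right,
      real_inner_smul_right, real_inner_self_eq_norm_sq, norm_smul, he, real_inner_comm, hcoord,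
      inv_pow, Real.sq_sqrt hpos.le, Real.norm_eq_abs, mul_one, sq_abs]
    field_simp
    ring
  unfold Wl lorentzBoost W
  rw [hnorm]
  congr 1
  field_simp
  ring

theorem integral_Wl_energy (hN : 3 ≤ N) {ℓ : ℝ} (hℓ : ℓ ^ 2 < 1) (t : ℝ) :
    (∫ x, ‖gradient (Wl N ℓ t) x‖ ^ 2) + ((N : ℝ) - 2) / 2 * (∫ x, dtWl N ℓ t x ^ 2) =
      (1 - ℓ ^ 2 / 2) / √(1 - ℓ ^ 2) * ∫ x, ‖gradient (W N) x‖ ^ 2 := by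
  have hd : Differentiable ℝ (W N) := fun x => (hasGradientAt_W hN x).differentiableAt
  have h := isRadial_W.integral_lorentzBoost_energy hd (integrable_norm_sq_gradient_W hN)
    (e := EuclideanSpace.single ⟨0, by omega⟩ 1) (by simp) hℓ t
  simpa only [dtWl, ← Wl_eq_lorentzBoost _ hℓ, finrank_euclideanSpace_fin] using h

end GroundState

theorem stmt3_general (N : ℕ) (hN : 3 ≤ N) (ℓ : ℝ) (hℓ : ℓ ∈ Set.Ioo (-1 : ℝ) 1) (t : ℝ) :
    (1 + ℓ ^ 4 / 8) * (∫ x, ‖gradient (W N) x‖ ^ 2)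
      ≤ (∫ x, ‖gradient (Wl N ℓ t) x‖ ^ 2)
          + ((N : ℝ) - 2) / 2 * (∫ x, dtWl N ℓ t x ^ 2) := by
  have hℓ' : ℓ ^ 2 < 1 := (sq_lt_one_iff_abs_lt_one ℓ).2 (abs_lt.2 hℓ)
  rw [integral_Wl_energy hN hℓ' t]
  exact mul_le_mul_of_nonneg_right (one_add_pow_four_div_eight_le hℓ')
    (integral_nonneg fun x => sq_nonneg _)

/-- Claim 2.3, second line: lower bound for the energy-norm of the solitary wave `W_ℓ`. -/
theorem stmt3 (N : ℕ) (hN : N = 3 ∨ N = 4 ∨ N = 5)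
    (ℓ : ℝ) (hℓ : ℓ ∈ Set.Ioo (-1 : ℝ) 1) (t : ℝ) :
    (1 + ℓ ^ 4 / 8) * (∫ x, ‖gradient (W N) x‖ ^ 2)
      ≤ (∫ x, ‖gradient (Wl N ℓ t) x‖ ^ 2)
          + ((N : ℝ) - 2) / 2 * (∫ x, dtWl N ℓ t x ^ 2) := by
  exact stmt3_general N (by omega) ℓ hℓ t

end
end
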